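/- arXiv:1308.5373 — 9 statements merged into one kernel-verified Lean document; each statement's English description precedes it below -/
import Mathlib

section
/- Let p be an odd prime, let m be odd, and let h be a positive integer with gcd(m,h) = 1. Set q = p^m and for (a,b) ∈ GF(q)² define R(a,b) = Σ_{x∈GF(q)} χ(a x^{p^h+1} + b x²). Then, as (a,b) runs through GF(q)², the sum S(a,b) = Σ_{y∈GF(p)*} ( R(ya, yb) + R(−ya, yb) ) takes the value 2(p−1)p^m for exactly 1 pair (a,b); the value (p−1)p^{(m+1)/2} for exactly (p^{m−1}+p^{(m−1)/2})(p^m−1) pairs; the value 0 for exactly (p^m−2p^{m−1}+1)(p^m−1) pairs; and the value −(p−1)p^{(m+1)/2} for exactly (p^{m−1}−p^{(m−1)/2})(p^m−1) pairs; and S(a,b) takes no other values. -/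
/-!
Let `L / K` be an extension of finite fields with trace `Tr : L → K`. Regrouping the terms,
`S(a, b)` is `T(a, b) + T(-a, b)`, where `T(a, b)` sums the exponential sums of all the nonzero
`K`-multiples of the quadratic form `Tr (a * σ x * x + b * x ^ 2)` and `σ` generates the Galois
group of `L / K`.
Diagonalising the form shows that a multiple by `u` changes its exponential sum by `χ(u) ^ rank`,
for `χ` the quadratic character; so `T(a, b)` vanishes if the rank is odd, and otherwise its square
is determined by the rank. A nonzero `x` in the radical satisfies
`σ a * σ (σ x) + 2 * σ b * σ x + a * x = 0`. Comparing two solutions bounds the dimension of the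
radical by 2; comparing a solution for `(a, b)` with one for `(-a, b)` gives an element `c ≠ 0` with
`σ c = -c`, which the norm excludes when the degree of `L / K` is odd. Hence, for odd degree, one of
`T(a, b)` and `T(-a, b)` always vanishes unless `a = b = 0`, the remaining one takes at most three
values `V, 0, -V`, and the first two moments of `S` determine how often each is taken.
-/

/-- The canonical additive character of a finite field `F` of characteristic `p`:
`χ(x) = exp(2π√(-1)·Tr(x)/p)`, where `Tr` is the absolute trace `F → GF(p)`. -/
noncomputable def canChar (p : ℕ) (F : Type*) [Field F] [Algebra (ZMod p) F] (x : F) : ℂ :=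
  Complex.exp (2 * Real.pi * Complex.I * ((Algebra.trace (ZMod p) F x).val : ℂ) / (p : ℂ))

open Finset Module

section QuadraticExponentialSums

theorem sum_units_eq_sum_compl_zero {K M : Type*} [Field K] [Fintype K] [DecidableEq K]
    [AddCommMonoid M] (f : K → M) : ∑ u : Kˣ, f u = ∑ x ∈ {0}ᶜ, f x := by
  rw [sum_subtype {0}ᶜ (p := (· ≠ 0)) (by simp)]
  exact unitsEquivNeZero.sum_comp fun x : {a : K // a ≠ 0} => f x

theorem addChar_map_sum_eq_prod {A M ι : Type*} [AddCommMonoid A] [CommMonoid M]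
    (ψ : AddChar A M) (s : Finset ι) (f : ι → A) : ψ (∑ i ∈ s, f i) = ∏ i ∈ s, ψ (f i) :=
  map_prod ψ.toMonoidHom (fun i => Multiplicative.ofAdd (f i)) s

variable {K E : Type*} [Field K] [Fintype K] [DecidableEq K] [CommRing E]

theorem sum_comp_sq (hK : ringChar K ≠ 2) (f : K → E) :
    ∑ t, f (t ^ 2) = ∑ s, (1 + (quadraticChar K s : E)) * f s := by
  have card_fiber (s : K) : (#{t | t ^ 2 = s} : E) = 1 + (quadraticChar K s : E) := by
    have := congrArg (Int.cast : ℤ → E) (quadraticChar_card_sqrts hK s)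
    rw [← Set.toFinset_ofPred, add_comm]
    exact_mod_cast this
  calc ∑ t, f (t ^ 2) = ∑ s, ∑ t with t ^ 2 = s, f s := (sum_fiberwise' univ (· ^ 2) f).symm
    _ = ∑ s, (1 + (quadraticChar K s : E)) * f s := by
        simp only [sum_const, nsmul_eq_mul, card_fiber]

theorem sum_units_quadraticChar_pow_of_odd (hK : ringChar K ≠ 2) {r : ℕ} (hr : Odd r) :
    ∑ u : Kˣ, quadraticChar K u ^ r = 0 := by
  have hχ : quadraticChar K ^ r = quadraticChar K := (quadraticChar_isQuadratic K).pow_odd hr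
  calc ∑ u : Kˣ, quadraticChar K u ^ r
    _ = ∑ u : Kˣ, quadraticChar K u := by simp only [← MulChar.pow_apply_coe, hχ]
    _ = ∑ x ∈ {0}ᶜ, quadraticChar K x := sum_units_eq_sum_compl_zero _
    _ = ∑ x, quadraticChar K x := sum_subset (subset_univ _) (by simp)
    _ = 0 := quadraticChar_sum_zero hK

theorem sum_units_quadraticChar_pow_of_even {r : ℕ} (hr : Even r) :
    ∑ u : Kˣ, quadraticChar K u ^ r = Fintype.card K - 1 := by
  have pow_eq_one (u : Kˣ) : quadraticChar K u ^ r = 1 := by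
    obtain ⟨s, rfl⟩ := even_iff_exists_two_mul.1 hr
    rw [pow_mul, quadraticChar_sq_one u.ne_zero, one_pow]
  simp only [pow_eq_one, sum_const, card_univ, Fintype.card_units, nsmul_one]
  exact Nat.cast_pred Fintype.card_pos

variable {V : Type*} [AddCommGroup V] [Module K V] [Fintype V]

/-- The exponential sum `∑ x, ψ (Q x)` of a quadratic form `Q` on a finite vector space. -/
def quadraticExpSum (ψ : AddChar K E) (Q : QuadraticForm K V) : E :=
  ∑ x, ψ (Q x)

/-- The sum of the exponential sums of all the multiples `u • Q`, `u ∈ Kˣ`, the multiple being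
encoded in the character: `ψ.mulShift u (Q x) = ψ (u * Q x)`. -/
def unitsQuadraticExpSum (ψ : AddChar K E) (Q : QuadraticForm K V) : E :=
  ∑ u : Kˣ, quadraticExpSum (ψ.mulShift u) Q

omit [DecidableEq K] in
theorem quadraticExpSum_eq_prod {ι : Type*} [Fintype ι] (ψ : AddChar K E) {Q : QuadraticForm K V}
    {w : ι → K} (hQ : Q.Equivalent (QuadraticMap.weightedSumSquares K w)) :
    quadraticExpSum ψ Q = ∏ i, ∑ t, ψ (w i * t ^ 2) := by
  classical
  obtain ⟨e⟩ := hQ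
  have apply_eq (x : V) : Q x = ∑ i, w i * e x i ^ 2 := by
    simp only [← e.map_app x, QuadraticMap.weightedSumSquares_apply, smul_eq_mul, ← sq]
  rw [quadraticExpSum, Fintype.prod_sum, ← e.toLinearEquiv.toEquiv.sum_comp]
  simp only [apply_eq, addChar_map_sum_eq_prod]
  rfl

omit [Fintype K] [Fintype V] in
theorem card_filter_weight_ne_zero {ι : Type*} [Fintype ι] [NeZero (2 : K)]
    {Q : QuadraticForm K V} {w : ι → K}
    (hQ : Q.Equivalent (QuadraticMap.weightedSumSquares K w)) :
    #{i | w i ≠ 0} = finrank K (V ⧸ Q.radical) := by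
  have card_zero : #{i | w i = 0} = finrank K Q.radical := by
    rw [QuadraticForm.finrank_radical_of_equiv_weightedSumSquares hQ,
      ← Set.ncard_coe_finset, coe_filter_univ]
  obtain ⟨e⟩ := hQ
  have : FiniteDimensional K V := e.toLinearEquiv.symm.finiteDimensional
  have card_index : Fintype.card ι = finrank K V := by
    rw [e.toLinearEquiv.finrank_eq, finrank_fintype_fun_eq_card]
  have card_split := card_filter_add_card_filter_not (s := univ) (w · = 0)
  have finrank_split := Q.radical.finrank_quotient_add_finrank
  rw [card_univ] at card_split
  lia

variable [IsDomain E] {ψ : AddChar K E}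

theorem sum_addChar_mul_sq (hK : ringChar K ≠ 2) (hψ : ψ ≠ 1) {c : K} (hc : c ≠ 0) :
    ∑ t, ψ (c * t ^ 2) = quadraticChar K c *
      gaussSum ((quadraticChar K).ringHomComp (Int.castRingHom E)) ψ := by
  have sum_linear : ∑ s, ψ (c * s) = 0 := by
    simpa [mul_comm c, hc] using AddChar.sum_mulShift c (.of_ne_one hψ)
  have χ_sq : (quadraticChar K c : E) * quadraticChar K c = 1 := by
    rw [← Int.cast_mul, ← sq, quadraticChar_sq_one hc, Int.cast_one]
  rw [sum_comp_sq hK (fun s => ψ (c * s)), ← gaussSum_mulShift _ ψ (Units.mk0 c hc)]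
  simp only [add_mul, one_mul, sum_add_distrib, sum_linear, zero_add, gaussSum, Units.val_mk0,
    AddChar.mulShift_apply, MulChar.ringHomComp_apply, eq_intCast, ← mul_assoc, χ_sq]

theorem sum_addChar_mul_sq_sq [CharZero E] (hK : ringChar K ≠ 2) (hψ : ψ ≠ 1) {c : K}
    (hc : c ≠ 0) :
    (∑ t, ψ (c * t ^ 2)) ^ 2 = quadraticChar K (-1) * Fintype.card K := by
  have χ_sq : (quadraticChar K c : E) ^ 2 = 1 := by exact_mod_cast quadraticChar_sq_one hc
  have χ_ne_one : (quadraticChar K).ringHomComp (Int.castRingHom E) ≠ 1 :=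
    (MulChar.ringHomComp_ne_one_iff (Int.castRingHom E).injective_int).2 (quadraticChar_ne_one hK)
  rw [sum_addChar_mul_sq hK hψ hc, mul_pow, χ_sq, one_mul,
    gaussSum_sq χ_ne_one ((quadraticChar_isQuadratic K).comp _) (.of_ne_one hψ),
    MulChar.ringHomComp_apply, eq_intCast]

theorem quadraticExpSum_mulShift (hK : ringChar K ≠ 2) (hψ : ψ ≠ 1) (Q : QuadraticForm K V)
    (u : Kˣ) : quadraticExpSum (ψ.mulShift u) Q =
      (quadraticChar K u : E) ^ finrank K (V ⧸ Q.radical) * quadraticExpSum ψ Q := by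
  have : NeZero (2 : K) := ⟨Ring.two_ne_zero hK⟩
  have : Invertible (2 : K) := invertibleOfNonzero two_ne_zero
  obtain ⟨w, hw⟩ := Q.equivalent_weightedSumSquares
  have shift_factor (i) : ∑ t, ψ.mulShift u (w i * t ^ 2) =
      (if w i ≠ 0 then (quadraticChar K u : E) else 1) * ∑ t, ψ (w i * t ^ 2) := by
    simp only [AddChar.mulShift_apply, ← mul_assoc]
    split_ifs with hi
    · rw [sum_addChar_mul_sq hK hψ (mul_ne_zero u.ne_zero hi), sum_addChar_mul_sq hK hψ hi,
        map_mul, Int.cast_mul, mul_assoc]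
    · simp [not_not.1 hi]
  rw [quadraticExpSum_eq_prod _ hw, quadraticExpSum_eq_prod _ hw,
    ← card_filter_weight_ne_zero hw, ← prod_const, prod_filter, ← prod_mul_distrib]
  exact prod_congr rfl fun i _ => shift_factor i

theorem quadraticExpSum_sq [CharZero E] (hK : ringChar K ≠ 2) (hψ : ψ ≠ 1)
    (Q : QuadraticForm K V) : quadraticExpSum ψ Q ^ 2 =
      (quadraticChar K (-1) : E) ^ finrank K (V ⧸ Q.radical) *
        Fintype.card K ^ (finrank K V + finrank K Q.radical) := by
  have : NeZero (2 : K) := ⟨Ring.two_ne_zero hK⟩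
  have : Invertible (2 : K) := invertibleOfNonzero two_ne_zero
  obtain ⟨w, hw⟩ := Q.equivalent_weightedSumSquares
  have sq_factor (i) : (∑ t, ψ (w i * t ^ 2)) ^ 2 = Fintype.card K *
      if w i = 0 then (Fintype.card K : E) else quadraticChar K (-1) := by
    split_ifs with hi
    · simp [hi, sq]
    · rw [sum_addChar_mul_sq_sq hK hψ hi, mul_comm]
  have card_zero : #{i | w i = 0} = finrank K Q.radical := by
    rw [QuadraticForm.finrank_radical_of_equiv_weightedSumSquares hw,
      ← Set.ncard_coe_finset, coe_filter_univ]
  rw [quadraticExpSum_eq_prod _ hw, ← prod_pow, prod_congr rfl fun i _ => sq_factor i,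
    prod_mul_distrib, prod_ite, prod_const, prod_const, prod_const, card_zero,
    card_filter_weight_ne_zero hw, card_univ, Fintype.card_fin]
  ring

theorem unitsQuadraticExpSum_eq_mul (hK : ringChar K ≠ 2) (hψ : ψ ≠ 1) (Q : QuadraticForm K V) :
    unitsQuadraticExpSum ψ Q =
      (∑ u : Kˣ, quadraticChar K u ^ finrank K (V ⧸ Q.radical) : ℤ) * quadraticExpSum ψ Q := by
  simp only [unitsQuadraticExpSum, quadraticExpSum_mulShift hK hψ, ← sum_mul, Int.cast_sum,
    Int.cast_pow]

theorem unitsQuadraticExpSum_eq_zero (hK : ringChar K ≠ 2) (hψ : ψ ≠ 1) {Q : QuadraticForm K V}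
    (hQ : Odd (finrank K (V ⧸ Q.radical))) : unitsQuadraticExpSum ψ Q = 0 := by
  rw [unitsQuadraticExpSum_eq_mul hK hψ, sum_units_quadraticChar_pow_of_odd hK hQ, Int.cast_zero,
    zero_mul]

theorem unitsQuadraticExpSum_sq [CharZero E] (hK : ringChar K ≠ 2) (hψ : ψ ≠ 1)
    {Q : QuadraticForm K V} (hQ : Even (finrank K (V ⧸ Q.radical))) :
    unitsQuadraticExpSum ψ Q ^ 2 = ((Fintype.card K : E) - 1) ^ 2 *
      Fintype.card K ^ (finrank K V + finrank K Q.radical) := by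
  have χ_pow : quadraticChar K (-1) ^ finrank K (V ⧸ Q.radical) = 1 := by
    obtain ⟨s, hs⟩ := even_iff_exists_two_mul.1 hQ
    rw [hs, pow_mul, quadraticChar_sq_one (neg_ne_zero.2 one_ne_zero), one_pow]
  rw [unitsQuadraticExpSum_eq_mul hK hψ, sum_units_quadraticChar_pow_of_even hQ, mul_pow,
    quadraticExpSum_sq hK hψ, ← Int.cast_pow (quadraticChar K (-1)), χ_pow]
  push_cast
  ring

end QuadraticExponentialSums

theorem finrank_le_finrank_map_add_finrank_ker {K V W : Type*} [DivisionRing K] [AddCommGroup V]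
    [Module K V] [FiniteDimensional K V] [AddCommGroup W] [Module K W] (f : V →ₗ[K] W)
    (N : Submodule K V) : finrank K N ≤ finrank K (N.map f) + finrank K f.ker := by
  have ker_le : finrank K (f.domRestrict N).ker ≤ finrank K f.ker := by
    rw [LinearMap.ker_domRestrict, ← Submodule.finrank_map_subtype_eq]
    exact Submodule.finrank_mono (Submodule.map_comap_le _ _)
  have := (f.domRestrict N).finrank_range_add_finrank_ker
  rw [LinearMap.range_domRestrict] at this
  lia

section TwistedTraceForm

variable {K L : Type*} [Field K] [Field L] [Algebra K L] {σ : L ≃ₐ[K] L} {a b : L}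

/-- The quadratic form `x ↦ Tr (a * σ x * x + b * x ^ 2)` on `L` over `K`. When `σ x = x ^ q ^ h` it
is the form `x ↦ Tr (a * x ^ (q ^ h + 1) + b * x ^ 2)`. -/
noncomputable def twistedTraceForm (σ : L ≃ₐ[K] L) (a b : L) : QuadraticForm K L :=
  LinearMap.BilinMap.toQuadraticMap
    ((Algebra.traceForm K L).compLeft (a • σ.toLinearMap + b • LinearMap.id))

theorem twistedTraceForm_apply (σ : L ≃ₐ[K] L) (a b x : L) :
    twistedTraceForm σ a b x = Algebra.trace K L (a * (σ x * x) + b * x ^ 2) := by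
  have : (a * σ x + b * x) * x = a * (σ x * x) + b * x ^ 2 := by ring
  exact congrArg (Algebra.trace K L) this

theorem polar_twistedTraceForm (σ : L ≃ₐ[K] L) (a b x y : L) :
    QuadraticMap.polar (twistedTraceForm σ a b) x y =
      Algebra.trace K L ((σ a * σ (σ x) + 2 * σ b * σ x + a * x) * σ y) := by
  have trace_map (z : L) : Algebra.trace K L (σ z) = Algebra.trace K L z :=
    Algebra.trace_eq_of_algEquiv σ z
  have : (σ a * σ (σ x) + 2 * σ b * σ x + a * x) * σ y =
      σ ((a * σ x + 2 * b * x) * y) + a * x * σ y := by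
    simp only [map_mul, map_add, map_ofNat]
    ring
  rw [this, map_add, trace_map]
  simp only [QuadraticMap.polar, twistedTraceForm_apply, ← map_sub, ← map_add]
  congr 1
  simp only [map_add]
  ring

theorem eq_zero_of_mem_radical_twistedTraceForm [FiniteDimensional K L] [Algebra.IsSeparable K L]
    {x : L} (hx : x ∈ (twistedTraceForm σ a b).radical) :
    σ a * σ (σ x) + 2 * σ b * σ x + a * x = 0 := by
  refine (traceForm_nondegenerate K L).1 _ fun y => ?_
  have := DFunLike.congr_fun (QuadraticMap.radical_le_ker_polarBilin hx) (σ.symm y)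
  rwa [QuadraticMap.polarBilin_apply_apply, polar_twistedTraceForm, σ.apply_symm_apply] at this

theorem left_ne_zero_of_mem_radical_twistedTraceForm [FiniteDimensional K L]
    [Algebra.IsSeparable K L] [NeZero (2 : K)] (hab : (a, b) ≠ 0) {x : L} (hx : x ≠ 0)
    (hxN : x ∈ (twistedTraceForm σ a b).radical) : a ≠ 0 := by
  rintro rfl
  have two_ne_zero : (2 : L) ≠ 0 := by
    rw [← map_ofNat (algebraMap K L)]
    exact (map_ne_zero _).2 (NeZero.ne 2)
  have : 2 * σ b * σ x = 0 := by simpa using eq_zero_of_mem_radical_twistedTraceForm hxN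
  simp_all

theorem mem_span_singleton_of_mul_map_eq (hσ : ∀ c, σ c = c → c ∈ Set.range (algebraMap K L))
    {x z : L} (hx : x ≠ 0) (hxz : x * σ z = z * σ x) : z ∈ K ∙ x := by
  have hσx : σ x ≠ 0 := (map_ne_zero σ).2 hx
  obtain ⟨t, ht⟩ := hσ (z / x) (by rw [map_div₀, div_eq_div_iff hσx hx, mul_comm, hxz])
  exact Submodule.mem_span_singleton.2 ⟨t, by rw [Algebra.smul_def, ht, div_mul_cancel₀ z hx]⟩

-- For `x` fixed in the radical, the values `a * (x * σ z - z * σ x)` for `z` in the radical are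
-- fixed by `σ`, and they vanish only if `z / x` is.
theorem finrank_radical_twistedTraceForm_le_two [FiniteDimensional K L] [Algebra.IsSeparable K L]
    [NeZero (2 : K)] (hσ : ∀ c, σ c = c → c ∈ Set.range (algebraMap K L)) (hab : (a, b) ≠ 0) :
    finrank K (twistedTraceForm σ a b).radical ≤ 2 := by
  set N := (twistedTraceForm σ a b).radical
  obtain hN | hN := eq_or_ne N ⊥
  · rw [hN, finrank_bot]
    exact zero_le_two
  obtain ⟨x, hxN, hx⟩ := N.ne_bot_iff.1 hN
  have hx_eq := eq_zero_of_mem_radical_twistedTraceForm hxN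
  have ha := left_ne_zero_of_mem_radical_twistedTraceForm hab hx hxN
  let φ : L →ₗ[K] L := x • σ.toLinearMap - σ x • LinearMap.id
  have φ_apply (z : L) : φ z = x * σ z - σ x * z := rfl
  have map_le : N.map φ ≤ K ∙ a⁻¹ := by
    rintro _ ⟨z, hz, rfl⟩
    have hz_eq := eq_zero_of_mem_radical_twistedTraceForm hz
    obtain ⟨t, ht⟩ := hσ (a * φ z) (by
      simp only [φ_apply, map_mul, map_sub]
      linear_combination σ x * hz_eq - σ z * hx_eq)
    exact Submodule.mem_span_singleton.2 ⟨t, by rw [Algebra.smul_def, ht]; field_simp⟩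
  have ker_le : φ.ker ≤ K ∙ x := fun z hz =>
    mem_span_singleton_of_mul_map_eq hσ hx (by
      linear_combination (φ_apply z).symm.trans (LinearMap.mem_ker.1 hz))
  calc finrank K N ≤ finrank K (N.map φ) + finrank K φ.ker :=
        finrank_le_finrank_map_add_finrank_ker φ N
    _ ≤ 1 + 1 := add_le_add
        ((Submodule.finrank_mono map_le).trans_eq (finrank_span_singleton (inv_ne_zero ha)))
        ((Submodule.finrank_mono ker_le).trans_eq (finrank_span_singleton hx))

theorem eq_zero_of_map_eq_neg [NeZero (2 : K)] (hL : Odd (finrank K L)) {c : L}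
    (hc : σ c = -c) : c = 0 := by
  have : FiniteDimensional K L := FiniteDimensional.of_finrank_pos hL.pos
  have norm_neg : Algebra.norm K (-c) = -Algebra.norm K c := by
    rw [← neg_one_mul c, map_mul, ← map_one (algebraMap K L), ← map_neg, Algebra.norm_algebraMap,
      hL.neg_one_pow, neg_one_mul]
  have norm_map : Algebra.norm K (σ c) = Algebra.norm K c := Algebra.norm_eq_of_algEquiv σ c
  rw [hc, norm_neg] at norm_map
  have two_mul_norm : 2 * Algebra.norm K c = 0 := by linear_combination -norm_map
  exact Algebra.norm_eq_zero_iff.1 ((mul_eq_zero.1 two_mul_norm).resolve_left two_ne_zero)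

theorem radical_eq_bot_or_radical_neg_eq_bot [FiniteDimensional K L] [Algebra.IsSeparable K L]
    [NeZero (2 : K)] (hL : Odd (finrank K L)) (hab : (a, b) ≠ 0) :
    (twistedTraceForm σ a b).radical = ⊥ ∨ (twistedTraceForm σ (-a) b).radical = ⊥ := by
  by_contra! h
  obtain ⟨x, hxN, hx⟩ := Submodule.ne_bot_iff _ |>.1 h.1
  obtain ⟨y, hyN, hy⟩ := Submodule.ne_bot_iff _ |>.1 h.2
  have hx_eq := eq_zero_of_mem_radical_twistedTraceForm hxN
  have hy_eq := eq_zero_of_mem_radical_twistedTraceForm hyN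
  have ha := left_ne_zero_of_mem_radical_twistedTraceForm hab hx hxN
  have sum_eq_zero : x * σ y + y * σ x = 0 := by
    refine (mul_eq_zero.1 (eq_zero_of_map_eq_neg (σ := σ) hL ?_)).resolve_left ha
    rw [map_neg] at hy_eq
    simp only [map_mul, map_add]
    linear_combination σ y * hx_eq - σ x * hy_eq
  have div_eq_zero : x / y = 0 := eq_zero_of_map_eq_neg (σ := σ) hL (by
    rw [map_div₀]
    field_simp [(map_ne_zero σ).2 hy]
    linear_combination sum_eq_zero)
  exact (div_ne_zero hx hy) div_eq_zero

end TwistedTraceForm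

section Moments

variable {R E : Type*} [CommRing R] [Fintype R] [DecidableEq R] [CommRing E] [IsDomain E]
  {ψ : AddChar R E}

theorem sum_prod_addChar_eq_ite (hψ : ψ.IsPrimitive) (c : R × R) :
    ∑ ab : R × R, ψ (ab.1 * c.1 + ab.2 * c.2) = if c = 0 then (Fintype.card R : E) ^ 2 else 0 := by
  simp only [AddChar.map_add_eq_mul, Fintype.sum_prod_type, ← mul_sum, ← sum_mul,
    AddChar.sum_mulShift _ hψ, Nat.cast_ite, Nat.cast_zero, Prod.ext_iff, Prod.fst_zero,
    Prod.snd_zero, ite_zero_mul_ite_zero, sq]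

theorem sum_sum_addChar_eq (hψ : ψ.IsPrimitive) {ι : Type*} [Fintype ι] (f : ι → R × R) :
    ∑ ab : R × R, ∑ i, ψ (ab.1 * (f i).1 + ab.2 * (f i).2) =
      Fintype.card R ^ 2 * #{i | f i = 0} := by
  rw [sum_comm]
  simp only [sum_prod_addChar_eq_ite hψ, ← sum_filter, sum_const, nsmul_eq_mul, mul_comm]

theorem sum_sum_addChar_sq_eq (hψ : ψ.IsPrimitive) {ι : Type*} [Fintype ι] (f : ι → R × R) :
    ∑ ab : R × R, (∑ i, ψ (ab.1 * (f i).1 + ab.2 * (f i).2)) ^ 2 =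
      Fintype.card R ^ 2 * ∑ i, (#{j | f i + f j = 0} : E) := by
  have mul_eq (ab : R × R) (i j : ι) :
      ψ (ab.1 * (f i).1 + ab.2 * (f i).2) * ψ (ab.1 * (f j).1 + ab.2 * (f j).2) =
        ψ (ab.1 * (f i + f j).1 + ab.2 * (f i + f j).2) := by
    rw [← AddChar.map_add_eq_mul, Prod.fst_add, Prod.snd_add]
    ring_nf
  simp only [sq (∑ _, _), sum_mul_sum, mul_eq]
  rw [sum_comm, mul_sum]
  exact sum_congr rfl fun i _ => sum_sum_addChar_eq hψ fun j => f i + f j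

end Moments

section TwistedPairs

variable {K L : Type*} [Field K] [Field L] [Algebra K L] {σ : L ≃ₐ[K] L}

/-- The coefficients of `a` and `b` in the argument `u * (a * σ x * x + b * x ^ 2)` of the trace
in a multiple `u • twistedTraceForm σ a b`. -/
def twistedPair (σ : L ≃ₐ[K] L) (i : Kˣ × L) : L × L :=
  (i.1 • (σ i.2 * i.2), i.1 • i.2 ^ 2)

theorem twistedPair_eq_zero_iff {u : Kˣ} {x : L} : twistedPair σ (u, x) = 0 ↔ x = 0 := by
  simp [twistedPair, Prod.ext_iff, smul_eq_zero_iff_eq]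

theorem twistedPair_add_twistedPair_smul (u v t : Kˣ) (x : L) :
    twistedPair σ (u, x) + twistedPair σ (v, t • x) =
      ((u + v * t ^ 2 : K) • (σ x * x), (u + v * t ^ 2 : K) • x ^ 2) := by
  simp only [twistedPair, Units.smul_def, Algebra.smul_def, Prod.mk_add_mk, map_add,
    map_mul, map_pow, AlgEquiv.commutes]
  ext <;> ring

theorem twistedPair_add_eq_zero_iff (hσ : ∀ c, σ c = c → c ∈ Set.range (algebraMap K L))
    {u : Kˣ} {x : L} (hx : x ≠ 0) (j : Kˣ × L) :
    twistedPair σ (u, x) + twistedPair σ j = 0 ↔ ∃ t : Kˣ, (-u / t ^ 2, t • x) = j := by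
  constructor
  · obtain ⟨v, z⟩ := j
    intro h
    have hz : z ≠ 0 := by
      rintro rfl
      rw [twistedPair_eq_zero_iff.2 rfl, add_zero] at h
      exact hx (twistedPair_eq_zero_iff.1 h)
    have cross_eq : x * σ z = z * σ x := by
      obtain ⟨h₁, h₂⟩ := Prod.ext_iff.1 h
      simp only [twistedPair, Units.smul_def, Algebra.smul_def, Prod.mk_add_mk, Prod.fst_zero,
        Prod.snd_zero] at h₁ h₂
      have hv : algebraMap K L v ≠ 0 := (map_ne_zero _).2 v.ne_zero
      refine mul_left_cancel₀ (mul_ne_zero (mul_ne_zero hv hx) hz) ?_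
      linear_combination x ^ 2 * h₁ - x * σ x * h₂
    obtain ⟨t, rfl⟩ := Submodule.mem_span_singleton.1
      (mem_span_singleton_of_mul_map_eq hσ hx cross_eq)
    lift t to Kˣ using IsUnit.mk0 t (by rintro rfl; exact hz (zero_smul K x))
    have coeff_eq_zero : (u + v * t ^ 2 : K) = 0 := by
      rw [← Units.smul_def, twistedPair_add_twistedPair_smul] at h
      simpa [hx] using (Prod.ext_iff.1 h).2
    refine ⟨t, Prod.ext (Units.ext ?_) rfl⟩
    push_cast
    field_simp
    linear_combination -coeff_eq_zero
  · rintro ⟨t, rfl⟩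
    rw [twistedPair_add_twistedPair_smul]
    simp

theorem card_filter_twistedPair_eq_zero [Fintype K] [DecidableEq K] [Fintype L] [DecidableEq L]
    (σ : L ≃ₐ[K] L) : #{i | twistedPair σ i = 0} = Fintype.card Kˣ := by
  rw [← card_univ, ← card_map ⟨fun u : Kˣ => (u, (0 : L)), Prod.mk_left_injective 0⟩]
  congr 1
  ext ⟨u, x⟩
  rw [mem_filter_univ, twistedPair_eq_zero_iff]
  simp [eq_comm]

theorem card_filter_twistedPair_add_eq_zero [Fintype K] [DecidableEq K] [Fintype L]
    [DecidableEq L] (hσ : ∀ c, σ c = c → c ∈ Set.range (algebraMap K L)) (i : Kˣ × L) :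
    #{j | twistedPair σ i + twistedPair σ j = 0} = Fintype.card Kˣ := by
  obtain ⟨u, x⟩ := i
  obtain rfl | hx := eq_or_ne x 0
  · simp only [twistedPair_eq_zero_iff.2, zero_add, card_filter_twistedPair_eq_zero]
  · have smul_injective : Function.Injective fun t : Kˣ => (-u / t ^ 2, t • x) := fun s t h => by
      simpa [Units.smul_def, hx, Units.val_inj] using congrArg Prod.snd h
    rw [← card_univ, ← card_image_of_injective _ smul_injective]
    congr 1
    ext j
    simp [twistedPair_add_eq_zero_iff hσ hx]

end TwistedPairs

section TwistedExpSums

theorem isPrimitive_compAddMonoidHom_trace {K L E : Type*} [Field K] [Field L] [Algebra K L]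
    [FiniteDimensional K L] [Algebra.IsSeparable K L] [CommMonoid E] {ψ : AddChar K E}
    (hψ : ψ ≠ 1) : (ψ.compAddMonoidHom (Algebra.trace K L).toAddMonoidHom).IsPrimitive := by
  refine .of_ne_one ?_
  obtain ⟨y, hy⟩ := AddChar.ne_one_iff.1 hψ
  obtain ⟨x, rfl⟩ := Algebra.trace_surjective K L y
  exact AddChar.ne_one_iff.2 ⟨x, hy⟩

variable {K L E : Type*} [Field K] [Fintype K] [DecidableEq K] [Field L] [Fintype L] [Algebra K L]
  [CommRing E] {ψ : AddChar K E} {σ : L ≃ₐ[K] L}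

/-- The sum `T(a, b) = ∑ u ∈ Kˣ, ∑ x ∈ L, ψ (u * Tr (a * σ x * x + b * x ^ 2))`. -/
noncomputable def twistedExpSum (ψ : AddChar K E) (σ : L ≃ₐ[K] L) (ab : L × L) : E :=
  unitsQuadraticExpSum ψ (twistedTraceForm σ ab.1 ab.2)

theorem twistedExpSum_eq_sum_twistedPair (ψ : AddChar K E) (σ : L ≃ₐ[K] L) (ab : L × L) :
    twistedExpSum ψ σ ab = ∑ i : Kˣ × L, ψ.compAddMonoidHom (Algebra.trace K L).toAddMonoidHom
      (ab.1 * (twistedPair σ i).1 + ab.2 * (twistedPair σ i).2) := by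
  rw [Fintype.sum_prod_type]
  refine sum_congr rfl fun u _ => sum_congr rfl fun x _ => congrArg ψ ?_
  rw [twistedPair, mul_smul_comm, mul_smul_comm, ← smul_add]
  exact (congrArg (u.val * ·) (twistedTraceForm_apply σ ab.1 ab.2 x)).trans
    (map_smul (Algebra.trace K L) u.val _).symm

theorem cast_card_units : (Fintype.card Kˣ : E) = Fintype.card K - 1 := by
  rw [Fintype.card_units, Nat.cast_pred Fintype.card_pos]

theorem twistedExpSum_zero (ψ : AddChar K E) (σ : L ≃ₐ[K] L) :
    twistedExpSum ψ σ 0 = (Fintype.card K - 1) * Fintype.card L := by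
  simp [twistedExpSum_eq_sum_twistedPair, ← cast_card_units]

theorem sum_twistedExpSum [IsDomain E] (hψ : ψ ≠ 1) (σ : L ≃ₐ[K] L) :
    ∑ ab, twistedExpSum ψ σ ab = (Fintype.card K - 1) * (Fintype.card L : E) ^ 2 := by
  classical
  simp only [twistedExpSum_eq_sum_twistedPair]
  rw [sum_sum_addChar_eq (isPrimitive_compAddMonoidHom_trace hψ), card_filter_twistedPair_eq_zero,
    cast_card_units, mul_comm]

theorem sum_twistedExpSum_sq [IsDomain E] (hψ : ψ ≠ 1)
    (hσ : ∀ c, σ c = c → c ∈ Set.range (algebraMap K L)) :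
    ∑ ab, twistedExpSum ψ σ ab ^ 2 = (Fintype.card K - 1) ^ 2 * (Fintype.card L : E) ^ 3 := by
  classical
  simp only [twistedExpSum_eq_sum_twistedPair]
  rw [sum_sum_addChar_sq_eq (isPrimitive_compAddMonoidHom_trace hψ)]
  simp only [card_filter_twistedPair_add_eq_zero hσ, sum_const, card_univ, Fintype.card_prod,
    nsmul_eq_mul, Nat.cast_mul, cast_card_units]
  ring

section OddDegree

variable [IsDomain E] {a b : L}

theorem twistedExpSum_eq_zero_of_radical_eq_bot (hK : ringChar K ≠ 2) (hψ : ψ ≠ 1)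
    (hL : Odd (finrank K L)) (hN : (twistedTraceForm σ a b).radical = ⊥) :
    twistedExpSum ψ σ (a, b) = 0 := by
  refine unitsQuadraticExpSum_eq_zero hK hψ ?_
  rwa [hN, (Submodule.quotEquivOfEqBot ⊥ rfl).finrank_eq]

theorem twistedExpSum_mul_twistedExpSum_neg (hK : ringChar K ≠ 2) (hψ : ψ ≠ 1)
    (hL : Odd (finrank K L)) (hab : (a, b) ≠ 0) :
    twistedExpSum ψ σ (a, b) * twistedExpSum ψ σ (-a, b) = 0 := by
  have : NeZero (2 : K) := ⟨Ring.two_ne_zero hK⟩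
  obtain h | h := radical_eq_bot_or_radical_neg_eq_bot (σ := σ) hL hab
  · rw [twistedExpSum_eq_zero_of_radical_eq_bot hK hψ hL h, zero_mul]
  · rw [twistedExpSum_eq_zero_of_radical_eq_bot hK hψ hL h, mul_zero]

theorem twistedExpSum_eq_or_eq_zero_or_eq_neg [CharZero E] (hK : ringChar K ≠ 2) (hψ : ψ ≠ 1)
    {k : ℕ} (hL : finrank K L = 2 * k + 1)
    (hσ : ∀ c, σ c = c → c ∈ Set.range (algebraMap K L)) (hab : (a, b) ≠ 0) :
    twistedExpSum ψ σ (a, b) = (Fintype.card K - 1) * Fintype.card K ^ (k + 1) ∨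
      twistedExpSum ψ σ (a, b) = 0 ∨
      twistedExpSum ψ σ (a, b) = -((Fintype.card K - 1) * Fintype.card K ^ (k + 1)) := by
  have : NeZero (2 : K) := ⟨Ring.two_ne_zero hK⟩
  set N := (twistedTraceForm σ a b).radical with hN
  obtain rank_even | rank_odd := (finrank K (L ⧸ N)).even_or_odd
  · have finrank_split := N.finrank_quotient_add_finrank
    have finrank_le : finrank K N ≤ 2 := finrank_radical_twistedTraceForm_le_two hσ hab
    have finrank_eq_one : finrank K N = 1 := by
      obtain ⟨s, hs⟩ := rank_even
      lia
    rw [or_left_comm, ← sq_eq_sq_iff_eq_or_eq_neg, twistedExpSum,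
      unitsQuadraticExpSum_sq hK hψ rank_even, ← hN, finrank_eq_one, hL]
    right
    ring
  · exact .inr (.inl (unitsQuadraticExpSum_eq_zero hK hψ rank_odd))

end OddDegree

end TwistedExpSums

section FourValuedFunctions

variable {α E : Type*} [Fintype α]

theorem sum_comp_eq_sum_ncard_smul {β M : Type*} [AddCommMonoid M] {f : α → β}
    {s : Finset β} (hf : ∀ x, f x ∈ s) (g : β → M) :
    ∑ x, g (f x) = ∑ y ∈ s, {x | f x = y}.ncard • g y := by
  classical
  rw [← sum_fiberwise_of_maps_to' (t := s) fun x _ => hf x]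
  refine sum_congr rfl fun y _ => ?_
  rw [sum_const, ← Set.ncard_coe_finset, coe_filter_univ]

variable [CommRing E] [IsDomain E] [CharZero E] {f : α → E} {z : α} {c : ℕ} {v : E}

theorem intCast_mul_injective (hv : v ≠ 0) : Function.Injective fun n : ℤ => (n : E) * v :=
  (mul_left_injective₀ hv).comp Int.cast_injective

omit [Fintype α] in
theorem ncard_apply_eq_eq_one (hc : 1 < c) (hv : v ≠ 0) (hz : f z = c * v)
    (hf : ∀ x ≠ z, f x = v ∨ f x = 0 ∨ f x = -v) : {x | f x = c * v}.ncard = 1 := by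
  refine Set.ncard_eq_one.2 ⟨z, Set.eq_singleton_iff_unique_mem.2 ⟨hz, fun x hx => ?_⟩⟩
  have ne_mul (n : ℤ) (hn : n ≠ c) : f x ≠ n * v := fun h =>
    hn (intCast_mul_injective hv (by simpa using h.symm.trans hx))
  by_contra hxz
  obtain h | h | h := hf x hxz
  · exact ne_mul 1 (by lia) (by simpa using h)
  · exact ne_mul 0 (by lia) (by simpa using h)
  · exact ne_mul (-1) (by lia) (by simpa using h)

theorem sum_comp_of_four_valued (hc : 1 < c) (hv : v ≠ 0) (hz : f z = c * v)
    (hf : ∀ x ≠ z, f x = v ∨ f x = 0 ∨ f x = -v) (g : E → E) :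
    ∑ x, g (f x) = g (c * v) + {x | f x = v}.ncard * g v + {x | f x = 0}.ncard * g 0 +
      {x | f x = -v}.ncard * g (-v) := by
  classical
  have mul_injective := intCast_mul_injective hv
  have hf_mem (x) : f x ∈ ({(c : ℤ), 1, 0, -1} : Finset ℤ).map ⟨_, mul_injective⟩ := by
    obtain rfl | hx := eq_or_ne x z
    · simp [hz]
    · have := hf x hx
      simp_all
  rw [sum_comp_eq_sum_ncard_smul hf_mem g, sum_map, sum_insert (by simp; lia),
    sum_insert (by simp), sum_insert (by simp), sum_singleton]
  simp [ncard_apply_eq_eq_one hc hv hz hf, add_assoc]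

theorem ncard_of_four_valued_of_moments (hc : 1 < c) (hv : v ≠ 0) (hz : f z = c * v)
    (hf : ∀ x ≠ z, f x = v ∨ f x = 0 ∨ f x = -v) {s t : E} (hs : ∑ x, f x = s * v)
    (ht : ∑ x, f x ^ 2 = t * v ^ 2) :
    2 * ({x | f x = v}.ncard : E) = t - c ^ 2 + (s - c) ∧
    2 * ({x | f x = -v}.ncard : E) = t - c ^ 2 - (s - c) ∧
    ({x | f x = 0}.ncard : E) = Fintype.card α - 1 - (t - c ^ 2) := by
  have sum_pow := sum_comp_of_four_valued hc hv hz hf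
  have moment_zero := sum_pow fun _ => 1
  have moment_one := sum_pow fun y => y
  have moment_two := sum_pow fun y => y ^ 2
  simp only [sum_const, card_univ, nsmul_eq_mul, mul_one] at moment_zero
  rw [hs] at moment_one
  rw [ht] at moment_two
  have sub_eq : ({x | f x = v}.ncard : E) - {x | f x = -v}.ncard = s - c :=
    mul_right_cancel₀ hv (by linear_combination -moment_one)
  have add_eq : ({x | f x = v}.ncard : E) + {x | f x = -v}.ncard = t - c ^ 2 :=
    mul_right_cancel₀ (pow_ne_zero 2 hv) (by linear_combination -moment_two)
  refine ⟨?_, ?_, ?_⟩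
  · linear_combination add_eq + sub_eq
  · linear_combination add_eq - sub_eq
  · linear_combination -moment_zero - add_eq

end FourValuedFunctions

section SymmetrizedSums

variable {K L E : Type*} [Field K] [Fintype K] [DecidableEq K] [Field L] [Fintype L] [Algebra K L]
  [CommRing E] [IsDomain E] {ψ : AddChar K E} {σ : L ≃ₐ[K] L}

/-- The sum `S(a, b) = T(a, b) + T(-a, b)` for `T = twistedExpSum ψ σ`. -/
noncomputable def symmTwistedExpSum (ψ : AddChar K E) (σ : L ≃ₐ[K] L) (ab : L × L) : E :=
  twistedExpSum ψ σ ab + twistedExpSum ψ σ (-ab.1, ab.2)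

omit [IsDomain E] in
theorem symmTwistedExpSum_zero (ψ : AddChar K E) (σ : L ≃ₐ[K] L) :
    symmTwistedExpSum ψ σ 0 = 2 * ((Fintype.card K - 1) * Fintype.card L) := by
  rw [symmTwistedExpSum, Prod.fst_zero, Prod.snd_zero, neg_zero, Prod.mk_zero_zero,
    twistedExpSum_zero, two_mul]

theorem symmTwistedExpSum_eq_or_eq_zero_or_eq_neg [CharZero E] (hK : ringChar K ≠ 2) (hψ : ψ ≠ 1)
    {k : ℕ} (hL : finrank K L = 2 * k + 1) (hσ : ∀ c, σ c = c → c ∈ Set.range (algebraMap K L))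
    {ab : L × L} (hab : ab ≠ 0) :
    symmTwistedExpSum ψ σ ab = (Fintype.card K - 1) * Fintype.card K ^ (k + 1) ∨
      symmTwistedExpSum ψ σ ab = 0 ∨
      symmTwistedExpSum ψ σ ab = -((Fintype.card K - 1) * Fintype.card K ^ (k + 1)) := by
  obtain ⟨a, b⟩ := ab
  have hab_neg : (-a, b) ≠ 0 := by simpa [Prod.ext_iff] using hab
  unfold symmTwistedExpSum
  obtain h | h := mul_eq_zero.1
    (twistedExpSum_mul_twistedExpSum_neg (σ := σ) hK hψ (hL ▸ odd_two_mul_add_one k) hab)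
  · rw [h, zero_add]
    exact twistedExpSum_eq_or_eq_zero_or_eq_neg hK hψ hL hσ hab_neg
  · rw [h, add_zero]
    exact twistedExpSum_eq_or_eq_zero_or_eq_neg hK hψ hL hσ hab

theorem sum_comp_neg_fst {A B M : Type*} [AddGroup A] [Fintype A] [Fintype B] [AddCommMonoid M]
    (f : A × B → M) : ∑ ab : A × B, f (-ab.1, ab.2) = ∑ ab, f ab :=
  ((Equiv.neg A).prodCongr (Equiv.refl B)).sum_comp f

theorem sum_symmTwistedExpSum (hψ : ψ ≠ 1) (σ : L ≃ₐ[K] L) :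
    ∑ ab, symmTwistedExpSum ψ σ ab = 2 * ((Fintype.card K - 1) * (Fintype.card L : E) ^ 2) := by
  simp only [symmTwistedExpSum, sum_add_distrib]
  rw [sum_comp_neg_fst, sum_twistedExpSum hψ, two_mul]

theorem sum_symmTwistedExpSum_sq (hK : ringChar K ≠ 2) (hψ : ψ ≠ 1) (hL : Odd (finrank K L))
    (hσ : ∀ c, σ c = c → c ∈ Set.range (algebraMap K L)) :
    ∑ ab, symmTwistedExpSum ψ σ ab ^ 2 =
      2 * ((Fintype.card K - 1) ^ 2 * (Fintype.card L : E) ^ 3) +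
        2 * ((Fintype.card K - 1) * Fintype.card L) ^ 2 := by
  have sum_mul : ∑ ab : L × L, twistedExpSum ψ σ ab * twistedExpSum ψ σ (-ab.1, ab.2) =
      ((Fintype.card K - 1) * Fintype.card L) ^ 2 := by
    rw [Fintype.sum_eq_single 0 fun ab hab => twistedExpSum_mul_twistedExpSum_neg hK hψ hL hab]
    rw [Prod.fst_zero, Prod.snd_zero, neg_zero, Prod.mk_zero_zero, twistedExpSum_zero, sq]
  simp only [symmTwistedExpSum, add_sq, sum_add_distrib, mul_assoc, ← mul_sum, sum_mul]
  rw [sum_comp_neg_fst fun ab => twistedExpSum ψ σ ab ^ 2, sum_twistedExpSum_sq hψ hσ]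
  ring

end SymmetrizedSums

section ValueDistribution

variable {K L E : Type*} [Field K] [Fintype K] [DecidableEq K] [Field L] [Fintype L] [Algebra K L]
  [CommRing E] {ψ : AddChar K E} {σ : L ≃ₐ[K] L} {k : ℕ}

theorem symmTwistedExpSum_zero_eq_mul (ψ : AddChar K E) (σ : L ≃ₐ[K] L)
    (hL : finrank K L = 2 * k + 1) : symmTwistedExpSum ψ σ 0 =
      (2 * Fintype.card K ^ k : ℕ) * ((Fintype.card K - 1) * Fintype.card K ^ (k + 1)) := by
  rw [symmTwistedExpSum_zero, card_eq_pow_finrank (K := K) (V := L), hL]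
  push_cast
  ring

omit [DecidableEq K] in
theorem card_sub_one_mul_card_pow_ne_zero [IsDomain E] [CharZero E] (n : ℕ) :
    ((Fintype.card K : E) - 1) * Fintype.card K ^ n ≠ 0 := by
  have card_ne_one : (Fintype.card K : E) ≠ 1 := by exact_mod_cast Fintype.one_lt_card.ne'
  have card_ne_zero : (Fintype.card K : E) ≠ 0 := by exact_mod_cast Fintype.card_ne_zero
  exact mul_ne_zero (sub_ne_zero.2 card_ne_one) (pow_ne_zero n card_ne_zero)

omit [DecidableEq K] in
theorem one_lt_two_mul_card_pow (n : ℕ) : 1 < 2 * Fintype.card K ^ n := by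
  have := Nat.one_le_pow n _ (Fintype.card_pos (α := K))
  lia

variable [IsDomain E] [CharZero E]

theorem ncard_symmTwistedExpSum_eq_max (hK : ringChar K ≠ 2) (hψ : ψ ≠ 1)
    (hL : finrank K L = 2 * k + 1) (hσ : ∀ c, σ c = c → c ∈ Set.range (algebraMap K L)) :
    {ab | symmTwistedExpSum ψ σ ab =
      2 * (Fintype.card K - 1) * Fintype.card K ^ (2 * k + 1)}.ncard = 1 := by
  have value_eq : 2 * ((Fintype.card K : E) - 1) * Fintype.card K ^ (2 * k + 1) =
      (2 * Fintype.card K ^ k : ℕ) * ((Fintype.card K - 1) * Fintype.card K ^ (k + 1)) := by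
    push_cast
    ring
  rw [value_eq]
  exact ncard_apply_eq_eq_one (one_lt_two_mul_card_pow k) (card_sub_one_mul_card_pow_ne_zero _)
    (symmTwistedExpSum_zero_eq_mul ψ σ hL)
    fun _ => symmTwistedExpSum_eq_or_eq_zero_or_eq_neg hK hψ hL hσ

theorem cast_ncard_symmTwistedExpSum (hK : ringChar K ≠ 2) (hψ : ψ ≠ 1)
    (hL : finrank K L = 2 * k + 1) (hσ : ∀ c, σ c = c → c ∈ Set.range (algebraMap K L)) :
    ({ab | symmTwistedExpSum ψ σ ab =
        (Fintype.card K - 1) * Fintype.card K ^ (k + 1)}.ncard : E) =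
      (Fintype.card K ^ (2 * k) + Fintype.card K ^ k) * (Fintype.card K ^ (2 * k + 1) - 1) ∧
    ({ab | symmTwistedExpSum ψ σ ab =
        -((Fintype.card K - 1) * Fintype.card K ^ (k + 1))}.ncard : E) =
      (Fintype.card K ^ (2 * k) - Fintype.card K ^ k) * (Fintype.card K ^ (2 * k + 1) - 1) ∧
    ({ab | symmTwistedExpSum ψ σ ab = 0}.ncard : E) =
      (Fintype.card K ^ (2 * k + 1) - 2 * Fintype.card K ^ (2 * k) + 1) *
        (Fintype.card K ^ (2 * k + 1) - 1) := by
  have card_eq : (Fintype.card L : E) = Fintype.card K ^ (2 * k + 1) := by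
    rw [← hL, card_eq_pow_finrank (K := K) (V := L), Nat.cast_pow]
  have moment_one : ∑ ab, symmTwistedExpSum ψ σ ab = 2 * Fintype.card K ^ (3 * k + 1) *
      ((Fintype.card K - 1) * Fintype.card K ^ (k + 1)) := by
    rw [sum_symmTwistedExpSum hψ, card_eq]
    ring
  have moment_two : ∑ ab, symmTwistedExpSum ψ σ ab ^ 2 =
      (2 * Fintype.card K ^ (4 * k + 1) + 2 * Fintype.card K ^ (2 * k)) *
        ((Fintype.card K - 1) * Fintype.card K ^ (k + 1)) ^ 2 := by
    rw [sum_symmTwistedExpSum_sq hK hψ (hL ▸ odd_two_mul_add_one k) hσ, card_eq]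
    ring
  obtain ⟨ncard_pos, ncard_neg, ncard_zero⟩ := ncard_of_four_valued_of_moments
    (one_lt_two_mul_card_pow k) (card_sub_one_mul_card_pow_ne_zero (k + 1))
    (symmTwistedExpSum_zero_eq_mul ψ σ hL)
    (fun _ => symmTwistedExpSum_eq_or_eq_zero_or_eq_neg hK hψ hL hσ) moment_one moment_two
  rw [Fintype.card_prod, Nat.cast_mul, card_eq] at ncard_zero
  push_cast at ncard_pos ncard_neg ncard_zero
  refine ⟨mul_left_cancel₀ two_ne_zero (ncard_pos.trans ?_),
    mul_left_cancel₀ two_ne_zero (ncard_neg.trans ?_), ncard_zero.trans ?_⟩ <;> ring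

theorem ncard_symmTwistedExpSum (hK : ringChar K ≠ 2) (hψ : ψ ≠ 1)
    (hL : finrank K L = 2 * k + 1) (hσ : ∀ c, σ c = c → c ∈ Set.range (algebraMap K L)) :
    {ab | symmTwistedExpSum ψ σ ab = (Fintype.card K - 1) * Fintype.card K ^ (k + 1)}.ncard =
      (Fintype.card K ^ (2 * k) + Fintype.card K ^ k) * (Fintype.card K ^ (2 * k + 1) - 1) ∧
    {ab | symmTwistedExpSum ψ σ ab = 0}.ncard =
      (Fintype.card K ^ (2 * k + 1) - 2 * Fintype.card K ^ (2 * k) + 1) *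
        (Fintype.card K ^ (2 * k + 1) - 1) ∧
    {ab | symmTwistedExpSum ψ σ ab = -((Fintype.card K - 1) * Fintype.card K ^ (k + 1))}.ncard =
      (Fintype.card K ^ (2 * k) - Fintype.card K ^ k) * (Fintype.card K ^ (2 * k + 1) - 1) := by
  obtain ⟨ncard_pos, ncard_neg, ncard_zero⟩ := cast_ncard_symmTwistedExpSum hK hψ hL hσ
  have one_le : 1 ≤ Fintype.card K ^ (2 * k + 1) := Nat.one_le_pow _ _ Fintype.card_pos
  have pow_le : Fintype.card K ^ k ≤ Fintype.card K ^ (2 * k) :=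
    Nat.pow_le_pow_right Fintype.card_pos (by lia)
  have two_mul_pow_le : 2 * Fintype.card K ^ (2 * k) ≤ Fintype.card K ^ (2 * k + 1) := by
    rw [pow_succ']
    exact Nat.mul_le_mul_right _ Fintype.one_lt_card
  refine ⟨Nat.cast_injective (R := E) (ncard_pos.trans ?_),
    Nat.cast_injective (R := E) (ncard_zero.trans ?_),
    Nat.cast_injective (R := E) (ncard_neg.trans ?_)⟩ <;>
  push_cast [Nat.cast_sub one_le, Nat.cast_sub pow_le, Nat.cast_sub two_mul_pow_le] <;> rfl

end ValueDistribution

section Frobenius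

open FiniteField

theorem smul_eq_self_of_pow_smul_eq_self_of_coprime {G α : Type*} [Group G] [MulAction G α] {g : G}
    {n : ℕ} (hn : n.Coprime (orderOf g)) {x : α} (hx : g ^ n • x = x) : g • x = x := by
  obtain ⟨i, hi⟩ := exists_pow_eq_self_of_coprime hn
  exact smul_eq_self_of_mem_zpowers ⟨i, (zpow_natCast _ _).trans hi⟩ hx

variable {K L : Type*} [Field K] [Fintype K] [Field L] [Finite L] [Algebra K L] {h : ℕ}

theorem frobeniusAlgEquivOfAlgebraic_pow_apply (h : ℕ) (x : L) :
    (frobeniusAlgEquivOfAlgebraic K L ^ h) x = x ^ Fintype.card K ^ h := by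
  rw [AlgEquiv.coe_pow, coe_frobeniusAlgEquivOfAlgebraic_iterate]

theorem mem_range_algebraMap_of_frobenius_pow_eq (hh : h.Coprime (finrank K L)) {c : L}
    (hc : (frobeniusAlgEquivOfAlgebraic K L ^ h) c = c) : c ∈ Set.range (algebraMap K L) := by
  rw [← orderOf_frobeniusAlgEquivOfAlgebraic] at hh
  refine (IsGalois.mem_range_algebraMap_iff_fixed c).2 fun f => ?_
  obtain ⟨i, rfl⟩ := (bijective_frobeniusAlgEquivOfAlgebraic_pow K L).surjective f
  exact smul_eq_self_of_mem_zpowers ⟨i, zpow_natCast _ _⟩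
    (smul_eq_self_of_pow_smul_eq_self_of_coprime hh hc)

theorem twistedExpSum_frobenius_pow {K L E : Type*} [Field K] [Fintype K] [DecidableEq K] [Field L]
    [Fintype L] [Algebra K L] [CommRing E] (ψ : AddChar K E) (h : ℕ) (a b : L) :
    twistedExpSum ψ (frobeniusAlgEquivOfAlgebraic K L ^ h) (a, b) =
      ∑ y ∈ ({0}ᶜ : Finset K), ∑ x, ψ (Algebra.trace K L
        (algebraMap K L y * a * x ^ (Fintype.card K ^ h + 1) + algebraMap K L y * b * x ^ 2)) := by
  have trace_eq (y : K) (x : L) : Algebra.trace K L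
      (algebraMap K L y * a * x ^ (Fintype.card K ^ h + 1) + algebraMap K L y * b * x ^ 2) =
        y * twistedTraceForm (frobeniusAlgEquivOfAlgebraic K L ^ h) a b x := by
    rw [twistedTraceForm_apply, frobeniusAlgEquivOfAlgebraic_pow_apply, ← pow_succ,
      ← smul_eq_mul y, ← map_smul, Algebra.smul_def, mul_add, mul_assoc, mul_assoc]
  simp only [trace_eq]
  exact sum_units_eq_sum_compl_zero fun y =>
    ∑ x, ψ (y * twistedTraceForm (frobeniusAlgEquivOfAlgebraic K L ^ h) a b x)

end Frobenius

theorem stmt1_general {K L E : Type*} [Field K] [Fintype K] [DecidableEq K] [Field L] [Fintype L]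
    [Algebra K L] [CommRing E] [IsDomain E] [CharZero E] {q m h : ℕ} (hK : Fintype.card K = q)
    (hq : Odd q) (hm : Odd m) (hmh : Nat.gcd m h = 1) (hL : Fintype.card L = q ^ m)
    {ψ : AddChar K E} (hψ : ψ ≠ 1) (R : L → L → E)
    (hR : R = fun a b => ∑ x, ψ (Algebra.trace K L (a * x ^ (q ^ h + 1) + b * x ^ 2)))
    (S : L × L → E)
    (hS : S = fun ab => ∑ y ∈ ({0}ᶜ : Finset K),
      (R (algebraMap K L y * ab.1) (algebraMap K L y * ab.2) +
        R (-(algebraMap K L y * ab.1)) (algebraMap K L y * ab.2))) :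
    {ab | S ab = 2 * ((q : E) - 1) * (q : E) ^ m}.ncard = 1 ∧
    {ab | S ab = ((q : E) - 1) * (q : E) ^ ((m + 1) / 2)}.ncard =
      (q ^ (m - 1) + q ^ ((m - 1) / 2)) * (q ^ m - 1) ∧
    {ab | S ab = 0}.ncard = (q ^ m - 2 * q ^ (m - 1) + 1) * (q ^ m - 1) ∧
    {ab | S ab = -(((q : E) - 1) * (q : E) ^ ((m + 1) / 2))}.ncard =
      (q ^ (m - 1) - q ^ ((m - 1) / 2)) * (q ^ m - 1) ∧
    ∀ ab, S ab = 2 * ((q : E) - 1) * (q : E) ^ m ∨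
      S ab = ((q : E) - 1) * (q : E) ^ ((m + 1) / 2) ∨
      S ab = 0 ∨
      S ab = -(((q : E) - 1) * (q : E) ^ ((m + 1) / 2)) := by
  subst hK
  have finrank_eq : finrank K L = m :=
    Nat.pow_right_injective Fintype.one_lt_card (card_eq_pow_finrank.symm.trans hL)
  have ringChar_ne_two : ringChar K ≠ 2 := fun h =>
    Nat.not_even_iff_odd.2 hq (Nat.even_iff.2 (FiniteField.even_card_of_char_two h))
  let σ := FiniteField.frobeniusAlgEquivOfAlgebraic K L ^ h
  have hσ (c : L) (hc : σ c = c) : c ∈ Set.range (algebraMap K L) :=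
    mem_range_algebraMap_of_frobenius_pow_eq (finrank_eq ▸ Nat.Coprime.symm hmh) hc
  have S_eq : S = symmTwistedExpSum ψ σ := by
    funext ⟨a, b⟩
    simp only [hS, hR, symmTwistedExpSum, σ, twistedExpSum_frobenius_pow, sum_add_distrib, mul_neg]
  obtain ⟨k, rfl⟩ := hm
  have half_succ : (2 * k + 1 + 1) / 2 = k + 1 := by lia
  rw [S_eq, Nat.add_sub_cancel, half_succ, Nat.mul_div_cancel_left k two_pos]
  obtain ⟨ncard_pos, ncard_zero, ncard_neg⟩ :=
    ncard_symmTwistedExpSum ringChar_ne_two hψ finrank_eq hσ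
  refine ⟨ncard_symmTwistedExpSum_eq_max ringChar_ne_two hψ finrank_eq hσ, ncard_pos, ncard_zero,
    ncard_neg, fun ab => ?_⟩
  obtain rfl | hab := eq_or_ne ab 0
  · left
    rw [symmTwistedExpSum_zero, hL, Nat.cast_pow, mul_assoc]
  · exact .inr (symmTwistedExpSum_eq_or_eq_zero_or_eq_neg ringChar_ne_two hψ finrank_eq hσ hab)

theorem canChar_eq_stdAddChar {p : ℕ} [NeZero p] {F : Type*} [Field F] [Algebra (ZMod p) F]
    (x : F) : canChar p F x = ZMod.stdAddChar (Algebra.trace (ZMod p) F x) := by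
  have := ZMod.stdAddChar_coe (N := p) ((Algebra.trace (ZMod p) F x).val : ℤ)
  rw [Int.cast_natCast, ZMod.natCast_zmod_val, Int.cast_natCast] at this
  exact this.symm

/-- value distribution of
`S(a,b) = Σ_{y ∈ GF(p)*} (R(ya, yb) + R(-ya, yb))` where
`R(a,b) = Σ_{x ∈ GF(q)} χ(a x^{p^h+1} + b x²)`, for `p` an odd prime, `m` odd,
`gcd(m,h) = 1`, `q = p^m`. -/
theorem stmt1 {p : ℕ} [Fact p.Prime] (hp : Odd p) {m h : ℕ} (hm : Odd m) (hh : 0 < h)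
    (hmh : Nat.gcd m h = 1)
    {F : Type*} [Field F] [Fintype F] [Algebra (ZMod p) F]
    (hF : Fintype.card F = p ^ m)
    (R : F → F → ℂ)
    (hR : R = fun a b => ∑ x : F, canChar p F (a * x ^ (p ^ h + 1) + b * x ^ 2))
    (S : F × F → ℂ)
    (hS : S = fun ab =>
      ∑ y ∈ ({0}ᶜ : Finset (ZMod p)),
        (R (algebraMap (ZMod p) F y * ab.1) (algebraMap (ZMod p) F y * ab.2) +
          R (-(algebraMap (ZMod p) F y * ab.1)) (algebraMap (ZMod p) F y * ab.2))) :
    {ab : F × F | S ab = 2 * ((p : ℂ) - 1) * (p : ℂ) ^ m}.ncard = 1 ∧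
    {ab : F × F | S ab = ((p : ℂ) - 1) * (p : ℂ) ^ ((m + 1) / 2)}.ncard =
      (p ^ (m - 1) + p ^ ((m - 1) / 2)) * (p ^ m - 1) ∧
    {ab : F × F | S ab = 0}.ncard = (p ^ m - 2 * p ^ (m - 1) + 1) * (p ^ m - 1) ∧
    {ab : F × F | S ab = -(((p : ℂ) - 1) * (p : ℂ) ^ ((m + 1) / 2))}.ncard =
      (p ^ (m - 1) - p ^ ((m - 1) / 2)) * (p ^ m - 1) ∧
    ∀ ab : F × F,
      S ab = 2 * ((p : ℂ) - 1) * (p : ℂ) ^ m ∨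
      S ab = ((p : ℂ) - 1) * (p : ℂ) ^ ((m + 1) / 2) ∨
      S ab = 0 ∨
      S ab = -(((p : ℂ) - 1) * (p : ℂ) ^ ((m + 1) / 2)) := by
  exact stmt1_general (ZMod.card p) hp hm hmh hF
    (by simpa using ZMod.isPrimitive_stdAddChar p one_ne_zero) R
    (by simpa only [canChar_eq_stdAddChar] using hR) S hS
end

section
/- Let m be odd, q = 3^m, and v = (3^{m+1}−1)/4. Then the number of pairs (a,b) ∈ GF(q)² such that wt(c(a,b)) = w equals: 1 if w = 0; (3^m−1)(3^{m−1}+3^{(m−1)/2}) if w = 2·3^{m−1} − 3^{(m−1)/2}; (3^m−1)(3^m−2·3^{m−1}+1) if w = 2·3^{m−1}; (3^m−1)(3^{m−1}−3^{(m−1)/2}) if w = 2·3^{m−1} + 3^{(m−1)/2}; and 0 for every other value of w. -/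
/-!
Since `-1` is a nonsquare in `F`, the signed square map `y ↦ χ(y) y²`, with `χ` the quadratic
character, permutes `F`, and `v` is chosen so that `x ↦ x ^ v` sends `χ(y) y²` to `χ(y) y`.
Substituting `x = χ(y) y²` thus turns `Tr(a x + b x ^ v)` into `± Tr(a y² + b y)`. As every `a ≠ 0`
is a signed square, completing the square expresses the number of zeros of `Tr(a y² + b y)` as a
level count `N(s) = #{y | Tr(y²) = s}`. Replacing `y²` by the signed square of `y` shows
`N(0) = q / 3`, and the factorisation `x² - y² = (x + y) (x - y)` evaluates `∑ N(s)²`. Over `ZMod 3`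
these two facts, together with `∑ N(s) = q`, leave for `N(1)` and `N(-1)` only the values
`q / 3 ± √(q / 3)`, in one order or the other.
-/

open Finset Function

section Counting

variable {ι κ : Type*} [Fintype ι] [Fintype κ]

theorem card_filter_comp_of_bijective {g : ι → κ} (hg : Bijective g) (p : κ → Prop)
    [DecidablePred p] : #{x | p (g x)} = #{y | p y} := by
  simp only [card_filter]
  exact hg.sum_comp fun y => if p y then 1 else 0

theorem card_filter_comp_eq_sum_fibers [DecidableEq κ] (g : ι → κ) (p : κ → Prop)
    [DecidablePred p] : #{x | p (g x)} = ∑ s, if p s then #{x | g x = s} else 0 := by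
  rw [card_filter, ← sum_fiberwise' univ g fun s => if p s then 1 else 0]
  simp

theorem card_filter_prod_eq_sum_card_fiber_sq [DecidableEq κ] (g : ι → κ) :
    #{p : ι × ι | g p.1 = g p.2} = ∑ s, #{x | g x = s} ^ 2 := by
  rw [card_filter, Fintype.sum_prod_type_right]
  simp only [← card_filter]
  rw [← sum_fiberwise' univ g fun s => #{x | g x = s}]
  simp [sq]

theorem hammingNorm_comp_of_injective {M : Type*} [Zero M] [DecidableEq M] {g : ι → κ}
    (hg : Injective g) {f : κ → M} (hf : support f ⊆ Set.range g) :
    hammingNorm (fun i => f (g i)) = hammingNorm f := by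
  refine card_bij (fun i _ => g i) (by simp) (fun _ _ _ _ h => hg h) fun y hy => ?_
  have hy' : f y ≠ 0 := by simpa using hy
  obtain ⟨i, rfl⟩ := hf hy'
  exact ⟨i, by simpa using hy', rfl⟩

theorem hammingNorm_add_card_zeros {M : Type*} [Zero M] [DecidableEq M] (f : κ → M) :
    hammingNorm f + #{y | f y = 0} = Fintype.card κ := by
  rw [add_comm]
  exact card_filter_add_card_filter_not _

theorem card_fiber_mul_card {G A : Type*} [AddGroup G] [Fintype G] [AddGroup A] [Fintype A]
    [DecidableEq A] {f : G →+ A} (hf : Surjective f) (s : A) :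
    #{x | f x = s} * Fintype.card A = Fintype.card G := by
  have hfib (t : A) : #{x | f x = t} = #{x | f x = s} :=
    AddMonoidHom.card_fiber_eq_of_mem_range f (hf t) (hf s)
  calc #{x | f x = s} * Fintype.card A = ∑ t, #{x | f x = t} := by simp [hfib, mul_comm]
    _ = Fintype.card G := (card_eq_sum_card_fiberwise (by simp)).symm

end Counting

section SignedSquare

theorem ringChar_ne_two_of_not_isSquare_neg_one {F : Type*} [Field F]
    (h : ¬IsSquare (-1 : F)) : ringChar F ≠ 2 := by
  intro h2
  have : CharP F 2 := h2 ▸ ringChar.charP F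
  exact h (by simp [CharTwo.neg_eq])

variable {F : Type*} [Field F] [Fintype F] [DecidableEq F]

theorem quadraticChar_neg_of_not_isSquare_neg_one (h : ¬IsSquare (-1 : F)) (y : F) :
    quadraticChar F (-y) = -quadraticChar F y := by
  rw [← neg_one_mul, map_mul, quadraticChar_neg_one_iff_not_isSquare.2 h, neg_one_mul]

theorem map_quadraticChar_mul_eq_zero_iff {A : Type*} [AddGroup A] (f : F →+ A) {z : F}
    (hz : z ≠ 0) (x : F) : f (quadraticChar F z * x) = 0 ↔ f x = 0 := by
  rcases quadraticChar_dichotomy hz with h | h <;> simp [h]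

theorem cast_quadraticChar_ne_zero {z : F} (hz : z ≠ 0) : (quadraticChar F z : F) ≠ 0 := by
  rcases quadraticChar_dichotomy hz with h | h <;> simp [h]

theorem cast_quadraticChar_sq {z : F} (hz : z ≠ 0) : (quadraticChar F z : F) ^ 2 = 1 := by
  exact_mod_cast congrArg (Int.cast : ℤ → F) (quadraticChar_sq_one hz)

/-- The signed square `χ(y) y²`, with `χ` the quadratic character. When `-1` is not a square this is
a permutation of `F`, used both as a change of variable and to write any coefficient as `± z²`. -/
def signedSq (y : F) : F := quadraticChar F y * y ^ 2

theorem signedSq_zero : signedSq (0 : F) = 0 := by simp [signedSq]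

theorem quadraticChar_signedSq (h : ¬IsSquare (-1 : F)) (y : F) :
    quadraticChar F (signedSq y) = quadraticChar F y := by
  obtain rfl | hy := eq_or_ne y 0
  · rw [signedSq_zero]
  rw [signedSq, map_mul, quadraticChar_sq_one' hy, mul_one]
  rcases quadraticChar_dichotomy hy with hχ | hχ
  · simp [hχ]
  · simpa [hχ] using quadraticChar_neg_one_iff_not_isSquare.2 h

theorem signedSq_bijective (h : ¬IsSquare (-1 : F)) : Bijective (signedSq : F → F) := by
  refine Finite.injective_iff_bijective.1 fun y z hyz => ?_
  have hχ : quadraticChar F y = quadraticChar F z := by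
    rw [← quadraticChar_signedSq h, hyz, quadraticChar_signedSq h]
  obtain rfl | hz := eq_or_ne z 0
  · rwa [quadraticChar_zero, quadraticChar_eq_zero_iff] at hχ
  rw [signedSq, signedSq, hχ] at hyz
  have hsq : y ^ 2 = z ^ 2 := mul_left_cancel₀ (cast_quadraticChar_ne_zero hz) hyz
  refine (sq_eq_sq_iff_eq_or_eq_neg.1 hsq).resolve_right ?_
  rintro rfl
  rw [quadraticChar_neg_of_not_isSquare_neg_one h] at hχ
  exact hz (quadraticChar_eq_zero_iff.1 (by lia))

theorem signedSq_pow (hF : ringChar F ≠ 2) {v k : ℕ} (hv : Even v) (hk : Odd k)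
    (hvk : 2 * v = k * (Fintype.card F / 2) + 1) (y : F) :
    signedSq y ^ v = quadraticChar F y * y := by
  obtain rfl | hy := eq_or_ne y 0
  · have hv0 : v ≠ 0 := by rintro rfl; simp at hvk
    simp [signedSq_zero, hv0]
  have hχ : (quadraticChar F y : F) ^ v = 1 := by
    obtain ⟨u, rfl⟩ := hv.two_dvd
    rw [pow_mul, cast_quadraticChar_sq hy, one_pow]
  have hχk : (quadraticChar F y : F) ^ k = quadraticChar F y := by
    obtain ⟨u, rfl⟩ := hk
    rw [pow_succ, pow_mul, cast_quadraticChar_sq hy, one_pow, one_mul]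
  calc signedSq y ^ v = (y ^ (Fintype.card F / 2)) ^ k * y := by
        rw [signedSq, mul_pow, hχ, one_mul, ← pow_mul, hvk, pow_succ, mul_comm k, pow_mul]
    _ = quadraticChar F y * y := by rw [← quadraticChar_eq_pow_of_char_ne_two' hF, hχk]

end SignedSquare

section Weights

variable {F A : Type*} [Field F] [Fintype F] [AddGroup A] [DecidableEq A]

theorem hammingNorm_pow_generator {M : Type*} [Zero M] [DecidableEq M] {α : Fˣ}
    (hα : ∀ x : Fˣ, x ∈ Subgroup.zpowers α) {n : ℕ} (hn : n = Fintype.card F - 1) {g : F → M}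
    (hg : g 0 = 0) :
    hammingNorm (fun i : Fin n => g ((α : F) ^ (i : ℕ))) = hammingNorm g := by
  classical
  have hord : orderOf α = n := by
    rw [orderOf_eq_card_of_forall_mem_zpowers hα, Nat.card_eq_fintype_card, Fintype.card_units, hn]
  have hinj : Injective fun i : Fin n => (α : F) ^ (i : ℕ) := fun i j hij =>
    Fin.ext <| pow_injOn_Iio_orderOf (x := α) (by simp [hord]) (by simp [hord]) <|
      Units.ext (by simpa using hij)
  refine hammingNorm_comp_of_injective hinj fun x hx => ?_
  have hx0 : x ≠ 0 := by rintro rfl; exact hx hg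
  obtain ⟨i, hi, hix⟩ := mem_image.1 <|
    (isOfFinOrder_of_finite α).mem_zpowers_iff_mem_range_orderOf.1 (hα (Units.mk0 x hx0))
  exact ⟨⟨i, hord ▸ mem_range.1 hi⟩, by simpa using congrArg Units.val hix⟩

/-- The word `y ↦ f (a y² + b y)` indexed by all of `F`; for `f` the trace, its weight is that of
the codeword `c(a, b)`. -/
def quadWord (f : F →+ A) (a b y : F) : A := f (a * y ^ 2 + b * y)

theorem hammingNorm_pow_add_pow_eq_quadWord (h : ¬IsSquare (-1 : F)) {α : Fˣ}
    (hα : ∀ x : Fˣ, x ∈ Subgroup.zpowers α) {n v k : ℕ} (hn : n = Fintype.card F - 1)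
    (hv : Even v) (hk : Odd k) (hvk : 2 * v = k * (Fintype.card F / 2) + 1) (f : F →+ A)
    (a b : F) :
    hammingNorm (fun i : Fin n => f (a * (α : F) ^ (i : ℕ)) + f (b * (α : F) ^ ((i : ℕ) * v))) =
      hammingNorm (quadWord f a b) := by
  classical
  have hv0 : v ≠ 0 := by rintro rfl; simp at hvk
  let g (x : F) : A := f (a * x + b * x ^ v)
  have hsign (y : F) : g (signedSq y) = 0 ↔ quadWord f a b y = 0 := by
    obtain rfl | hy := eq_or_ne y 0
    · simp [g, quadWord, signedSq_zero, hv0]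
    have hgy : g (signedSq y) = f (quadraticChar F y * (a * y ^ 2 + b * y)) := by
      simp only [g, signedSq_pow (ringChar_ne_two_of_not_isSquare_neg_one h) hv hk hvk]
      rw [signedSq]
      ring_nf
    rw [hgy, quadWord, map_quadraticChar_mul_eq_zero_iff f hy]
  calc
    _ = hammingNorm fun i : Fin n => g ((α : F) ^ (i : ℕ)) := by simp only [g, pow_mul, map_add]
    _ = hammingNorm g := hammingNorm_pow_generator hα hn (by simp [g, hv0])
    _ = hammingNorm fun y => g (signedSq y) :=
      (hammingNorm_comp_of_injective (signedSq_bijective h).injective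
        (by simp [(signedSq_bijective h).surjective.range_eq])).symm
    _ = hammingNorm (quadWord f a b) := by simp only [hammingNorm, ne_eq, hsign]

/-- The number of `y : F` such that `f (y²) = s`, in terms of which the weights of the words
`quadWord f a b` are computed. -/
def sqFiberCard (f : F →+ A) (s : A) : ℕ := #{y | f (y ^ 2) = s}

theorem hammingNorm_quadWord_zero_left (f : F →+ A) {b : F} (hb : b ≠ 0) :
    hammingNorm (quadWord f 0 b) + #{y | f y = 0} = Fintype.card F := by
  rw [← hammingNorm_add_card_zeros (quadWord f 0 b),
    ← card_filter_comp_of_bijective (mulLeft_bijective₀ b hb) (f · = 0)]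
  simp only [quadWord, zero_mul, zero_add]

theorem hammingNorm_quadWord_signedSq [DecidableEq F] (f : F →+ A) {z : F} (hz : z ≠ 0) (u : F) :
    hammingNorm (quadWord f (signedSq z) (2 * quadraticChar F z * z * u)) +
      sqFiberCard f (f (u ^ 2)) = Fintype.card F := by
  have hzero (y : F) : quadWord f (signedSq z) (2 * quadraticChar F z * z * u) y = 0 ↔
      f ((z * y + u) ^ 2) = f (u ^ 2) := by
    have hsquare : signedSq z * y ^ 2 + 2 * quadraticChar F z * z * u * y =
        quadraticChar F z * ((z * y + u) ^ 2 - u ^ 2) := by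
      rw [signedSq]
      ring
    rw [quadWord, hsquare, map_quadraticChar_mul_eq_zero_iff f hz, map_sub, sub_eq_zero]
  have hbij : Bijective fun y : F => z * y + u :=
    (AddGroup.addRight_bijective u).comp (mulLeft_bijective₀ z hz)
  rw [← hammingNorm_add_card_zeros (quadWord f (signedSq z) (2 * quadraticChar F z * z * u)),
    sqFiberCard, ← card_filter_comp_of_bijective hbij (fun y => f (y ^ 2) = f (u ^ 2))]
  simp only [hzero]

theorem card_hammingNorm_quadWord_zero_left (f : F →+ A) (w : ℕ) :
    #{b | hammingNorm (quadWord f 0 b) = w} = (if w = 0 then 1 else 0) +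
      if w + #{y | f y = 0} = Fintype.card F then Fintype.card F - 1 else 0 := by
  classical
  have hne (b : F) (hb : b ∈ univ.erase 0) : hammingNorm (quadWord f 0 b) = w ↔
      w + #{y | f y = 0} = Fintype.card F := by
    have := hammingNorm_quadWord_zero_left f (ne_of_mem_erase hb)
    lia
  have hzero : hammingNorm (quadWord f 0 0) = 0 := by simp [hammingNorm, quadWord]
  rw [card_filter, ← add_sum_erase _ _ (mem_univ (0 : F)),
    sum_congr rfl fun b hb => if_congr (hne b hb) rfl rfl, hzero]
  simp [eq_comm]

theorem card_hammingNorm_quadWord_of_ne_zero (h : ¬IsSquare (-1 : F)) (f : F →+ A)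
    [Fintype A] {a : F} (ha : a ≠ 0) (w : ℕ) :
    #{b | hammingNorm (quadWord f a b) = w} =
      ∑ s, if w + sqFiberCard f s = Fintype.card F then sqFiberCard f s else 0 := by
  classical
  obtain ⟨z, rfl⟩ := (signedSq_bijective h).surjective a
  have hz : z ≠ 0 := by rintro rfl; exact ha signedSq_zero
  have h2 : (2 : F) ≠ 0 := Ring.two_ne_zero (ringChar_ne_two_of_not_isSquare_neg_one h)
  have hweight (u : F) :
      hammingNorm (quadWord f (signedSq z) (2 * quadraticChar F z * z * u)) = w ↔
        w + sqFiberCard f (f (u ^ 2)) = Fintype.card F := by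
    have := hammingNorm_quadWord_signedSq f hz u
    lia
  have hcoeff : 2 * (quadraticChar F z : F) * z ≠ 0 :=
    mul_ne_zero (mul_ne_zero h2 (cast_quadraticChar_ne_zero hz)) hz
  rw [← card_filter_comp_of_bijective (mulLeft_bijective₀ _ hcoeff)]
  simp only [hweight]
  exact card_filter_comp_eq_sum_fibers (fun u => f (u ^ 2))
    fun s => w + sqFiberCard f s = Fintype.card F

theorem card_hammingNorm_quadWord (h : ¬IsSquare (-1 : F)) [Fintype A] (f : F →+ A) (w : ℕ) :
    #{ab : F × F | hammingNorm (quadWord f ab.1 ab.2) = w} = (if w = 0 then 1 else 0) +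
      (if w + #{y | f y = 0} = Fintype.card F then Fintype.card F - 1 else 0) +
      (Fintype.card F - 1) *
        ∑ s, if w + sqFiberCard f s = Fintype.card F then sqFiberCard f s else 0 := by
  classical
  rw [card_filter, Fintype.sum_prod_type]
  simp only [← card_filter]
  rw [← add_sum_erase _ _ (mem_univ (0 : F)), card_hammingNorm_quadWord_zero_left,
    sum_congr rfl fun a ha => card_hammingNorm_quadWord_of_ne_zero h f (ne_of_mem_erase ha) w]
  simp

end Weights

section LevelCounts

theorem add_sub_bijective {K : Type*} [Field K] (h2 : (2 : K) ≠ 0) :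
    Bijective fun p : K × K => (p.1 + p.2, p.1 - p.2) :=
  bijective_iff_has_inverse.2 ⟨fun p => ((p.1 + p.2) / 2, (p.1 - p.2) / 2),
    fun p => by ext <;> simp only <;> field_simp <;> ring,
    fun p => by ext <;> simp only <;> field_simp <;> ring⟩

variable {F A : Type*} [Field F] [Fintype F] [AddGroup A] [DecidableEq A]

theorem sqFiberCard_zero (h : ¬IsSquare (-1 : F)) (f : F →+ A) :
    sqFiberCard f 0 = #{y | f y = 0} := by
  classical
  have hsign (y : F) : f (signedSq y) = 0 ↔ f (y ^ 2) = 0 := by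
    obtain rfl | hy := eq_or_ne y 0
    · simp [signedSq_zero]
    · exact map_quadraticChar_mul_eq_zero_iff f hy _
  rw [← card_filter_comp_of_bijective (signedSq_bijective h) (f · = 0)]
  simp only [hsign, sqFiberCard]

theorem sum_sqFiberCard [Fintype A] (f : F →+ A) : ∑ s, sqFiberCard f s = Fintype.card F :=
  (card_eq_sum_card_fiberwise (by simp)).symm

theorem card_map_mul_eq_zero (f : F →+ A) :
    #{p : F × F | f (p.1 * p.2) = 0} =
      Fintype.card F + (Fintype.card F - 1) * #{y | f y = 0} := by
  classical
  have hne (x : F) (hx : x ∈ univ.erase 0) : #{y | f (x * y) = 0} = #{y | f y = 0} :=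
    card_filter_comp_of_bijective (mulLeft_bijective₀ x (ne_of_mem_erase hx)) (f · = 0)
  rw [card_filter, Fintype.sum_prod_type]
  simp only [← card_filter]
  rw [← add_sum_erase _ _ (mem_univ (0 : F)), sum_congr rfl hne]
  simp

theorem sum_sqFiberCard_sq [Fintype A] (hF : ringChar F ≠ 2) (f : F →+ A) :
    ∑ s, sqFiberCard f s ^ 2 =
      Fintype.card F + (Fintype.card F - 1) * #{y | f y = 0} := by
  have hfactor (p : F × F) : f ((p.1 + p.2) * (p.1 - p.2)) = 0 ↔ f (p.1 ^ 2) = f (p.2 ^ 2) := by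
    rw [← sq_sub_sq, map_sub, sub_eq_zero]
  calc ∑ s, sqFiberCard f s ^ 2 = #{p : F × F | f (p.1 ^ 2) = f (p.2 ^ 2)} :=
        (card_filter_prod_eq_sum_card_fiber_sq fun y => f (y ^ 2)).symm
    _ = #{p : F × F | f ((p.1 + p.2) * (p.1 - p.2)) = 0} := by simp only [hfactor]
    _ = #{p : F × F | f (p.1 * p.2) = 0} :=
        card_filter_comp_of_bijective (add_sub_bijective (Ring.two_ne_zero hF))
          fun p => f (p.1 * p.2) = 0
    _ = _ := card_map_mul_eq_zero f

end LevelCounts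

section Ternary

variable {F : Type*} [Field F] [Fintype F] {f : F →+ ZMod 3} {d : ℕ}

theorem sum_zmod_three {M : Type*} [AddCommMonoid M] (g : ZMod 3 → M) :
    ∑ s, g s = g 0 + g 1 + g 2 :=
  Fin.sum_univ_three g

theorem card_zeros_zmod_three (hf : Surjective f) (hd : Fintype.card F = 3 * d ^ 2) :
    #{y | f y = 0} = d ^ 2 := by
  have := card_fiber_mul_card hf 0
  rw [ZMod.card] at this
  lia

theorem sqFiberCard_zmod_three (h : ¬IsSquare (-1 : F)) (hf : Surjective f)
    (hd : Fintype.card F = 3 * d ^ 2) :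
    sqFiberCard f 1 = d ^ 2 + d ∧ sqFiberCard f 2 = d ^ 2 - d ∨
      sqFiberCard f 1 = d ^ 2 - d ∧ sqFiberCard f 2 = d ^ 2 + d := by
  have hsum := sum_sqFiberCard f
  have hsq := sum_sqFiberCard_sq (ringChar_ne_two_of_not_isSquare_neg_one h) f
  have hzero := sqFiberCard_zero h f
  rw [card_zeros_zmod_three hf hd] at hzero hsq
  rw [sum_zmod_three, hzero, hd] at hsum
  rw [sum_zmod_three, hzero, hd] at hsq
  have hdd : d ≤ d ^ 2 := Nat.le_self_pow two_ne_zero d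
  have hpos : 1 ≤ 3 * d ^ 2 := hd ▸ Fintype.card_pos
  zify [hdd, hpos] at hsum hsq ⊢
  have hdev : (sqFiberCard f 1 - d ^ 2 : ℤ) ^ 2 = d ^ 2 := by
    have h2 : (sqFiberCard f 2 : ℤ) = 2 * d ^ 2 - sqFiberCard f 1 := by linarith
    rw [h2] at hsq
    linarith
  rcases sq_eq_sq_iff_eq_or_eq_neg.1 hdev with h1 | h1
  · exact .inl ⟨by linarith, by linarith⟩
  · exact .inr ⟨by linarith, by linarith⟩

theorem card_hammingNorm_quadWord_zmod_three (h : ¬IsSquare (-1 : F)) (hf : Surjective f)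
    (hd : Fintype.card F = 3 * d ^ 2) (w : ℕ) :
    #{ab : F × F | hammingNorm (quadWord f ab.1 ab.2) = w} =
      if w = 0 then 1
      else if w = 2 * d ^ 2 - d then (3 * d ^ 2 - 1) * (d ^ 2 + d)
      else if w = 2 * d ^ 2 then (3 * d ^ 2 - 1) * (d ^ 2 + 1)
      else if w = 2 * d ^ 2 + d then (3 * d ^ 2 - 1) * (d ^ 2 - d)
      else 0 := by
  have hcases := sqFiberCard_zmod_three h hf hd
  have hdd : d ≤ d ^ 2 := Nat.le_self_pow two_ne_zero d
  have hpos : 0 < d := Nat.pos_of_ne_zero fun h0 => by simp [h0] at hd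
  have hzero := card_zeros_zmod_three hf hd
  rw [card_hammingNorm_quadWord h, sum_zmod_three, sqFiberCard_zero h, hzero, hd]
  generalize d ^ 2 = e at *
  rcases hcases with ⟨h1, h2⟩ | ⟨h1, h2⟩ <;> rw [h1, h2] <;> split_ifs <;> lia

end Ternary

theorem not_isSquare_neg_one_of_card_eq_three_pow {F : Type*} [Field F] [Fintype F] {m : ℕ}
    (hm : Odd m) (hF : Fintype.card F = 3 ^ m) : ¬IsSquare (-1 : F) := by
  rw [FiniteField.isSquare_neg_one_iff, hF, not_not]
  obtain ⟨k, rfl⟩ := hm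
  simp [pow_succ, pow_mul, Nat.mul_mod, Nat.pow_mod]

theorem even_and_two_mul_three_pow_succ_sub_one_div_four {m : ℕ} (hm : Odd m) :
    Even ((3 ^ (m + 1) - 1) / 4) ∧ 2 * ((3 ^ (m + 1) - 1) / 4) = 3 * (3 ^ m / 2) + 1 := by
  have hmod : 3 ^ m % 8 = 3 := by
    obtain ⟨k, rfl⟩ := hm
    simp [pow_succ, pow_mul, Nat.mul_mod, Nat.pow_mod]
  rw [pow_succ, Nat.even_iff]
  lia

/-- weight distribution of the ternary cyclic code `C_{(1,v,3,m)}` with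
`m` odd and `v = (3^{m+1}-1)/4`; codewords are `c(a,b)_i = Tr(a α^i) + Tr(b α^{iv})`. -/
theorem stmt3 {m : ℕ} (hm : Odd m)
    {F : Type*} [Field F] [Fintype F] [Algebra (ZMod 3) F]
    (hF : Fintype.card F = 3 ^ m)
    (α : Fˣ) (hα : ∀ x : Fˣ, x ∈ Subgroup.zpowers α)
    (v : ℕ) (hv : v = (3 ^ (m + 1) - 1) / 4)
    (c : F × F → Fin (3 ^ m - 1) → ZMod 3)
    (hc : c = fun (ab : F × F) (i : Fin (3 ^ m - 1)) =>
      Algebra.trace (ZMod 3) F (ab.1 * (α : F) ^ (i : ℕ)) +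
        Algebra.trace (ZMod 3) F (ab.2 * (α : F) ^ ((i : ℕ) * v))) :
    ∀ w : ℕ,
      {ab : F × F | hammingNorm (c ab) = w}.ncard =
        if w = 0 then 1
        else if w = 2 * 3 ^ (m - 1) - 3 ^ ((m - 1) / 2) then
          (3 ^ m - 1) * (3 ^ (m - 1) + 3 ^ ((m - 1) / 2))
        else if w = 2 * 3 ^ (m - 1) then
          (3 ^ m - 1) * (3 ^ m - 2 * 3 ^ (m - 1) + 1)
        else if w = 2 * 3 ^ (m - 1) + 3 ^ ((m - 1) / 2) then
          (3 ^ m - 1) * (3 ^ (m - 1) - 3 ^ ((m - 1) / 2))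
        else 0 := by
  classical
  intro w
  have h := not_isSquare_neg_one_of_card_eq_three_pow hm hF
  obtain ⟨hv_even, hv_two⟩ := even_and_two_mul_three_pow_succ_sub_one_div_four hm
  rw [← hv] at hv_even hv_two
  rw [← hF] at hv_two
  let f : F →+ ZMod 3 := (Algebra.trace (ZMod 3) F).toAddMonoidHom
  have hf : Surjective f := Algebra.trace_surjective (ZMod 3) F
  have hweight (ab : F × F) : hammingNorm (c ab) = hammingNorm (quadWord f ab.1 ab.2) := by
    rw [hc]
    exact hammingNorm_pow_add_pow_eq_quadWord h hα (by rw [hF]) hv_even (by decide) hv_two f _ _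
  obtain ⟨k, rfl⟩ := hm
  have hq : 3 ^ (2 * k + 1) = 3 * (3 ^ k) ^ 2 := by ring
  have hE : 3 ^ (2 * k + 1 - 1) = (3 ^ k) ^ 2 := by rw [add_tsub_cancel_right, pow_mul']
  have hk : (2 * k + 1 - 1) / 2 = k := by lia
  have hcoeff : 3 * (3 ^ k) ^ 2 - 2 * (3 ^ k) ^ 2 + 1 = (3 ^ k) ^ 2 + 1 := by lia
  simp only [hweight]
  rw [← coe_filter_univ, Set.ncard_coe_finset,
    card_hammingNorm_quadWord_zmod_three h hf (hF.trans hq), hq, hE, hk, hcoeff]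
end

section
/- Let m be odd, q = 3^m, and v = (3^{m+1}−1)/4. Then the only x ∈ GF(q)* satisfying (−x−1)^v + x^v + 1 = 0 is x = 1. -/
/-!
Since `4v = 3(q - 1) + 2`, every `y ∈ GF(q)` satisfies `(y^v)^4 = y^2`, that is, `(y^v)^2 = ±y`.
Put `y = -x - 1`, `a = x^v` and `b = y^v`, so that `x + y + 1 = 0` and the equation reads
`a + b + 1 = 0`. In characteristic 3, substituting `x = ±a^2` and `y = ±b^2` into `x + y + 1 = 0`
gives `(a - 1)^2 = 0` when both signs are `+`, and `a b = 0` for the other three choices.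
The latter is impossible: if `x` or `y` vanishes then the other one is `-1`, whose `v`-th power
is `1` because `v` is even, and the equation becomes `2 = 0`.
-/

theorem eq_one_or_mul_eq_zero_of_sq_eq_or_eq_neg {R : Type*} [CommRing R] [NoZeroDivisors R]
    [CharP R 3] {x y a b : R} (hxy : x + y + 1 = 0) (hab : a + b + 1 = 0)
    (hx : a ^ 2 = x ∨ a ^ 2 = -x) (hy : b ^ 2 = y ∨ b ^ 2 = -y) :
    x = 1 ∨ a * b = 0 := by
  have three_eq_zero : (3 : R) = 0 := mod_cast CharP.cast_eq_zero R 3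
  obtain rfl : b = -a - 1 := by linear_combination hab
  rcases hx with hx | hx <;> rcases hy with hy | hy
  · have sq_eq_zero : (a - 1) ^ 2 = 0 := by
      linear_combination -hx - hy - hxy + (a ^ 2 + 1) * three_eq_zero
    have ha : a = 1 := sub_eq_zero.mp (eq_zero_of_pow_eq_zero sq_eq_zero)
    left
    rw [← hx, ha, one_pow]
  · have ha : a = 0 := by linear_combination hx - hy + hxy + a * three_eq_zero
    exact .inr (by rw [ha, zero_mul])
  · have hb : -a - 1 = 0 := by linear_combination hy - hx + hxy - (a + 1) * three_eq_zero
    exact .inr (by rw [hb, mul_zero])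
  · right
    linear_combination hx + hy - hxy - (a ^ 2 + a) * three_eq_zero

theorem ne_zero_of_pow_add_pow_add_one_eq_zero {R : Type*} [CommRing R] [NeZero (2 : R)]
    {v : ℕ} (hv : Even v) (hv₀ : v ≠ 0) {x y : R}
    (hxy : x + y + 1 = 0) (hpow : x ^ v + y ^ v + 1 = 0) : x ≠ 0 := by
  rintro rfl
  obtain rfl : y = -1 := by linear_combination hxy
  rw [zero_pow hv₀, hv.neg_one_pow, zero_add, one_add_one_eq_two] at hpow
  exact two_ne_zero hpow

theorem neg_sub_one_pow_add_pow_add_one_eq_zero_iff {R : Type*} [CommRing R] [IsDomain R]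
    [CharP R 3] {v : ℕ} (hv : Even v)
    (hsq : ∀ y : R, (y ^ v) ^ 2 = y ∨ (y ^ v) ^ 2 = -y) {x : R} :
    (-x - 1) ^ v + x ^ v + 1 = 0 ↔ x = 1 := by
  have three_eq_zero : (3 : R) = 0 := mod_cast CharP.cast_eq_zero R 3
  constructor
  · intro h
    have hv₀ : v ≠ 0 := by
      rintro rfl
      simpa using hsq 0
    have : NeZero (2 : R) := ⟨Ring.two_ne_zero (by rw [ringChar.eq R 3]; decide)⟩
    have hxy : x + (-x - 1) + 1 = 0 := by ring
    have hpow : x ^ v + (-x - 1) ^ v + 1 = 0 := by rwa [add_comm (x ^ v)]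
    have hx : x ≠ 0 := ne_zero_of_pow_add_pow_add_one_eq_zero hv hv₀ hxy hpow
    have hy : -x - 1 ≠ 0 :=
      ne_zero_of_pow_add_pow_add_one_eq_zero hv hv₀ (by rwa [add_comm (-x - 1)]) h
    exact (eq_one_or_mul_eq_zero_of_sq_eq_or_eq_neg hxy hpow (hsq x) (hsq _)).resolve_right
      (mul_ne_zero (pow_ne_zero v hx) (pow_ne_zero v hy))
  · rintro rfl
    have neg_two : (-1 - 1 : R) = 1 := by linear_combination -three_eq_zero
    rw [neg_two, one_pow]
    linear_combination three_eq_zero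

theorem pow_sq_eq_or_eq_neg_of_four_mul_modEq_two {F : Type*} [Field F] [Fintype F] {v : ℕ}
    (hv₀ : v ≠ 0) (hv : 4 * v ≡ 2 [MOD Fintype.card F - 1]) (y : F) :
    (y ^ v) ^ 2 = y ∨ (y ^ v) ^ 2 = -y := by
  rcases eq_or_ne y 0 with rfl | hy
  · left
    rw [zero_pow hv₀, zero_pow two_ne_zero]
  · apply sq_eq_sq_iff_eq_or_eq_neg.mp
    calc ((y ^ v) ^ 2) ^ 2 = y ^ (4 * v) := by ring
      _ = y ^ 2 := pow_eq_pow_of_modEq hv (FiniteField.pow_card_sub_one_eq_one y hy)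

/-- for `m` odd, `q = 3^m` and `v = (3^{m+1}-1)/4`, the only `x ∈ GF(q)*`
satisfying `(-x-1)^v + x^v + 1 = 0` is `x = 1`. -/
theorem stmt5 {m : ℕ} (hm : Odd m)
    {F : Type*} [Field F] [Fintype F] (hF : Fintype.card F = 3 ^ m)
    (v : ℕ) (hv : v = (3 ^ (m + 1) - 1) / 4) :
    ∀ x : F, x ≠ 0 → ((-x - 1) ^ v + x ^ v + 1 = 0 ↔ x = 1) := by
  have : CharP F 3 := charP_of_card_eq_prime_pow hF
  obtain ⟨w, hw⟩ : 3 ^ 2 - 1 ∣ 3 ^ (m + 1) - 1 :=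
    Nat.pow_sub_one_dvd_pow_sub_one 3 hm.add_one.two_dvd
  have card_pos : 0 < 3 ^ m := by positivity
  have v_even : Even v := ⟨w, by omega⟩
  have v_ne_zero : v ≠ 0 := by omega
  have four_mul_v : 4 * v = 2 + (Fintype.card F - 1) * 3 := by omega
  have modEq : 4 * v ≡ 2 [MOD Fintype.card F - 1] :=
    four_mul_v ▸ Nat.add_modulus_mul_modEq_iff.mpr rfl
  exact fun x _ ↦ neg_sub_one_pow_add_pow_add_one_eq_zero_iff v_even
    (pow_sq_eq_or_eq_neg_of_four_mul_modEq_two v_ne_zero modEq)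
end

section
/- Let m be odd, q = 3^m, and v = (3^{m+1}−1)/4. Then the only x ∈ GF(q) satisfying (x+1)^v − x^v − 1 = 0 is x = 0. -/
/-!
Modulo `q - 1` the exponent satisfies `4 * v ≡ 2`, so `(y ^ v) ^ 4 = y ^ 2` and `(y ^ v) ^ 2 = ± y`
for every `y`. Applied to a square root of `-1`, the first identity gives `1 = -1`, so `-1` is not
a square. As `v` is even, `b = x ^ v` and `b + 1 = (x + 1) ^ v` are squares. The four choices of
sign in `b ^ 2 = ± x` and `(b + 1) ^ 2 = ± (x + 1)` lead to `b = 0`, to `b = -1`, or to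
`b + 1 = -b ^ 2`; the last two would make `-1` a square.
-/

section Exponent

variable {m : ℕ}

theorem three_pow_mod_eight_of_odd (hm : Odd m) : 3 ^ m % 8 = 3 := by
  obtain ⟨k, rfl⟩ := hm
  rw [pow_succ, pow_mul, Nat.mul_mod, Nat.pow_mod]
  norm_num

theorem even_three_pow_succ_sub_one_div_four (hm : Odd m) : Even ((3 ^ (m + 1) - 1) / 4) := by
  have hmod := three_pow_mod_eight_of_odd hm
  rw [Nat.even_iff, pow_succ]
  omega

theorem three_pow_succ_sub_one_div_four_ne_zero (hm : Odd m) : (3 ^ (m + 1) - 1) / 4 ≠ 0 := by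
  have hmod := three_pow_mod_eight_of_odd hm
  rw [pow_succ]
  omega

theorem four_mul_three_pow_succ_sub_one_div_four_modEq (hm : Odd m) :
    4 * ((3 ^ (m + 1) - 1) / 4) ≡ 2 [MOD 3 ^ m - 1] := by
  have hmod := three_pow_mod_eight_of_odd hm
  have hexp : 4 * ((3 ^ (m + 1) - 1) / 4) = 2 + (3 ^ m - 1) * 3 := by
    rw [pow_succ]
    omega
  rw [hexp]
  exact Nat.add_modulus_mul_modEq_iff.mpr rfl

end Exponent

theorem pow_eq_pow_of_modEq_card_sub_one {G₀ : Type*} [GroupWithZero G₀] [Fintype G₀] {k l : ℕ}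
    (hk : k ≠ 0) (hl : l ≠ 0) (h : k ≡ l [MOD Fintype.card G₀ - 1]) (x : G₀) :
    x ^ k = x ^ l := by
  rcases eq_or_ne x 0 with rfl | hx
  · rw [zero_pow hk, zero_pow hl]
  · exact pow_eq_pow_of_modEq h (FiniteField.pow_card_sub_one_eq_one x hx)

theorem not_isSquare_neg_one_of_pow_four_mul_eq_sq {M : Type*} [Monoid M] [HasDistribNeg M] {v : ℕ}
    (hne : (-1 : M) ≠ 1) (h : ∀ y : M, y ^ (4 * v) = y ^ 2) : ¬IsSquare (-1 : M) := by
  rintro ⟨i, hi⟩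
  have hi2 : i ^ 2 = -1 := by rw [hi, sq]
  have hi4 : i ^ 4 = 1 := by rw [pow_mul i 2 2, hi2, neg_one_sq]
  apply hne
  calc (-1 : M) = i ^ (4 * v) := by rw [h, hi2]
    _ = 1 := by rw [pow_mul, hi4, one_pow]

theorem sq_pow_eq_self_or_eq_neg {R : Type*} [CommRing R] [NoZeroDivisors R] {v : ℕ} {y : R}
    (h : y ^ (4 * v) = y ^ 2) : (y ^ v) ^ 2 = y ∨ (y ^ v) ^ 2 = -y := by
  apply sq_eq_sq_iff_eq_or_eq_neg.mp
  rw [← h]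
  ring

section Field

variable {F : Type*} [Field F] {b x : F}

theorem sq_add_add_one_ne_zero_of_isSquare_add_one (hneg : ¬IsSquare (-1 : F))
    (hb : IsSquare (b + 1)) : b ^ 2 + b + 1 ≠ 0 := by
  intro hzero
  obtain ⟨s, hs⟩ := hb
  have hb0 : b ≠ 0 := by
    rintro rfl
    simp at hzero
  refine hneg ⟨s / b, ?_⟩
  field_simp
  linear_combination -hzero + hs

theorem eq_zero_of_isSquare_of_sq_eq_or_eq_neg (hneg : ¬IsSquare (-1 : F))
    (hb : IsSquare b) (hb1 : IsSquare (b + 1)) (hbx : b ^ 2 = x ∨ b ^ 2 = -x)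
    (hbx1 : (b + 1) ^ 2 = x + 1 ∨ (b + 1) ^ 2 = -(x + 1)) : x = 0 := by
  have h2 : (2 : F) ≠ 0 := fun h ↦ hneg ⟨1, by linear_combination -h⟩
  have hb1_ne : b + 1 ≠ 0 := fun h ↦ hneg (eq_neg_of_add_eq_zero_left h ▸ hb)
  suffices hb0 : b = 0 by simpa [hb0, eq_comm] using hbx
  rcases hbx with hbx | hbx <;> rcases hbx1 with hbx1 | hbx1
  · exact (mul_eq_zero_iff_left h2).mp (by linear_combination hbx1 - hbx)
  · have hzero : 2 * (b ^ 2 + b + 1) = 0 := by linear_combination hbx1 + hbx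
    exact absurd hzero (mul_ne_zero h2 (sq_add_add_one_ne_zero_of_isSquare_add_one hneg hb1))
  · have hzero : 2 * (b + 1) * b = 0 := by linear_combination hbx1 + hbx
    exact (mul_eq_zero_iff_left (mul_ne_zero h2 hb1_ne)).mp hzero
  · have hzero : 2 * (b + 1) = 0 := by linear_combination hbx1 - hbx
    exact absurd hzero (mul_ne_zero h2 hb1_ne)

end Field

theorem stmt6_general {F : Type*} [Field F] [Fintype F] (hF : Odd (Fintype.card F))
    {v : ℕ} (hv : Even v) (hv0 : v ≠ 0) (hmod : 4 * v ≡ 2 [MOD Fintype.card F - 1]) (x : F) :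
    (x + 1) ^ v - x ^ v - 1 = 0 ↔ x = 0 := by
  have hpow : ∀ y : F, y ^ (4 * v) = y ^ 2 :=
    pow_eq_pow_of_modEq_card_sub_one (by positivity) two_ne_zero hmod
  have hchar : ringChar F ≠ 2 := fun h ↦
    Nat.not_even_iff_odd.mpr hF (Nat.even_iff.mpr (FiniteField.even_card_of_char_two h))
  have hneg : ¬IsSquare (-1 : F) :=
    not_isSquare_neg_one_of_pow_four_mul_eq_sq (Ring.neg_one_ne_one_of_char_ne_two hchar) hpow
  constructor
  · intro h
    have hsucc : (x + 1) ^ v = x ^ v + 1 := by linear_combination h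
    exact eq_zero_of_isSquare_of_sq_eq_or_eq_neg hneg (hv.isSquare_pow x)
      (hsucc ▸ hv.isSquare_pow (x + 1)) (sq_pow_eq_self_or_eq_neg (hpow x))
      (hsucc ▸ sq_pow_eq_self_or_eq_neg (hpow (x + 1)))
  · rintro rfl
    simp [hv0]

/-- for `m` odd, `q = 3^m` and `v = (3^{m+1}-1)/4`, the only `x ∈ GF(q)`
satisfying `(x+1)^v - x^v - 1 = 0` is `x = 0`. -/
theorem stmt6 {m : ℕ} (hm : Odd m)
    {F : Type*} [Field F] [Fintype F] (hF : Fintype.card F = 3 ^ m)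
    (v : ℕ) (hv : v = (3 ^ (m + 1) - 1) / 4) :
    ∀ x : F, ((x + 1) ^ v - x ^ v - 1 = 0 ↔ x = 0) := by
  subst hv
  exact stmt6_general (hF ▸ Odd.pow (by decide)) (even_three_pow_succ_sub_one_div_four hm)
    (three_pow_succ_sub_one_div_four_ne_zero hm)
    (hF ▸ four_mul_three_pow_succ_sub_one_div_four_modEq hm)
end

section
/- Let m ≡ 7 (mod 8), q = 3^m, h = (m+1)/8, and s = 3^h + 1. Then a pair (x₁, y₁) ∈ GF(q) × GF(q) satisfies y₁² − x₁² = 1 if and only if there exists θ ∈ GF(q)* such that x₁ = θ − θ^{−1} and y₁ = −θ − θ^{−1}. Moreover, for such θ one has x₁^s = θ^s + θ^{−s} − (θ^{3^h−1} + θ^{1−3^h}) and y₁^s = θ^s + θ^{−s} + (θ^{3^h−1} + θ^{1−3^h}). -/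
/-! The equation `y ^ 2 - x ^ 2 = 1` says that `θ = y - x` is a unit with inverse `y + x`, and
in characteristic `3` this system is solved by `x` and `y` without halving, because `2⁻¹ = -1`.
Since Frobenius is additive, `(a ± b) ^ (p ^ h + 1) = (a ^ p ^ h ± b ^ p ^ h) * (a ± b)`; its two
cross terms share the factor `a * b`, which is `1` for `a = θ` and `b = θ⁻¹`. -/

section CommSemiring

variable {R : Type*} [CommSemiring R] (p : ℕ) [ExpChar R p]

theorem add_pow_expChar_pow_add_one (a b : R) (h : ℕ) :
    (a + b) ^ (p ^ h + 1) =
      a ^ (p ^ h + 1) + b ^ (p ^ h + 1) + a * b * (a ^ (p ^ h - 1) + b ^ (p ^ h - 1)) := by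
  have hp : p ^ h ≠ 0 := pow_ne_zero h (expChar_ne_zero R p)
  calc (a + b) ^ (p ^ h + 1)
      = (a ^ p ^ h + b ^ p ^ h) * (a + b) := by rw [pow_succ, add_pow_expChar_pow]
    _ = a ^ (p ^ h + 1) + b ^ (p ^ h + 1) + (b * a ^ p ^ h + a * b ^ p ^ h) := by ring
    _ = _ := by rw [← pow_sub_one_mul hp a, ← pow_sub_one_mul hp b]; ring

end CommSemiring

section CommRing

variable {R : Type*} [CommRing R]

theorem sub_pow_expChar_pow_add_one (p : ℕ) [ExpChar R p] (a b : R) (h : ℕ) :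
    (a - b) ^ (p ^ h + 1) =
      a ^ (p ^ h + 1) + b ^ (p ^ h + 1) - a * b * (a ^ (p ^ h - 1) + b ^ (p ^ h - 1)) := by
  have hp : p ^ h ≠ 0 := pow_ne_zero h (expChar_ne_zero R p)
  calc (a - b) ^ (p ^ h + 1)
      = (a ^ p ^ h - b ^ p ^ h) * (a - b) := by rw [pow_succ, sub_pow_expChar_pow]
    _ = a ^ (p ^ h + 1) + b ^ (p ^ h + 1) - (b * a ^ p ^ h + a * b ^ p ^ h) := by ring
    _ = _ := by rw [← pow_sub_one_mul hp a, ← pow_sub_one_mul hp b]; ring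

theorem sq_sub_sq_eq_one_iff_exists_unit {x y : R} :
    y ^ 2 - x ^ 2 = 1 ↔ ∃ u : Rˣ, y - x = u ∧ y + x = ↑u⁻¹ := by
  rw [sq_sub_sq, mul_comm]
  constructor
  · intro hxy
    exact ⟨Units.mkOfMulEqOne _ _ hxy, rfl, rfl⟩
  · rintro ⟨u, hsub, hadd⟩
    rw [hsub, hadd, u.mul_inv]

variable [CharP R 3]

theorem sub_eq_and_add_eq_iff_of_charP_three {x y a b : R} :
    y - x = a ∧ y + x = b ↔ x = a - b ∧ y = -a - b := by
  have three_eq_zero : (3 : R) = 0 := CharP.ofNat_eq_zero R 3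
  constructor
  · rintro ⟨rfl, rfl⟩
    exact ⟨by linear_combination x * three_eq_zero, by linear_combination y * three_eq_zero⟩
  · rintro ⟨rfl, rfl⟩
    exact ⟨by linear_combination -a * three_eq_zero, by linear_combination -b * three_eq_zero⟩

theorem stmt8_general (h : ℕ) :
    (∀ x y : R, y ^ 2 - x ^ 2 = 1 ↔
        ∃ u : Rˣ, x = u - ↑u⁻¹ ∧ y = -u - ↑u⁻¹) ∧
    (∀ u : Rˣ,
        (u - ↑u⁻¹ : R) ^ (3 ^ h + 1) =
          (u : R) ^ (3 ^ h + 1) + (↑u⁻¹ : R) ^ (3 ^ h + 1) -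
            ((u : R) ^ (3 ^ h - 1) + (↑u⁻¹ : R) ^ (3 ^ h - 1)) ∧
        (-u - ↑u⁻¹ : R) ^ (3 ^ h + 1) =
          (u : R) ^ (3 ^ h + 1) + (↑u⁻¹ : R) ^ (3 ^ h + 1) +
            ((u : R) ^ (3 ^ h - 1) + (↑u⁻¹ : R) ^ (3 ^ h - 1))) := by
  have : ExpChar R 3 := .prime Nat.prime_three
  have even_exponent : Even (3 ^ h + 1) := (Odd.pow (by decide)).add_one
  refine ⟨fun x y ↦ ?_, fun u ↦ ⟨?_, ?_⟩⟩
  · simp only [sq_sub_sq_eq_one_iff_exists_unit, sub_eq_and_add_eq_iff_of_charP_three]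
  · rw [sub_pow_expChar_pow_add_one 3, u.mul_inv, one_mul]
  · rw [← neg_add', even_exponent.neg_pow, add_pow_expChar_pow_add_one 3, u.mul_inv, one_mul]

end CommRing

/-- with `m ≡ 7 (mod 8)`, `q = 3^m`, `h = (m+1)/8` and `s = 3^h + 1`:
the solutions of `y₁² - x₁² = 1` in `GF(q)²` are exactly the pairs
`(θ - θ⁻¹, -θ - θ⁻¹)` for `θ ∈ GF(q)*`, and for such `θ` one has
`x₁^s = θ^s + θ^{-s} - (θ^{3^h-1} + θ^{1-3^h})` and
`y₁^s = θ^s + θ^{-s} + (θ^{3^h-1} + θ^{1-3^h})`. -/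
theorem stmt8 {m : ℕ} (hm : m % 8 = 7)
    {F : Type*} [Field F] [Fintype F] (hF : Fintype.card F = 3 ^ m)
    (h s : ℕ) (hh : h = (m + 1) / 8) (hs : s = 3 ^ h + 1) :
    (∀ x₁ y₁ : F, y₁ ^ 2 - x₁ ^ 2 = 1 ↔
        ∃ θ : F, θ ≠ 0 ∧ x₁ = θ - θ⁻¹ ∧ y₁ = -θ - θ⁻¹) ∧
    (∀ θ : F, θ ≠ 0 →
        (θ - θ⁻¹) ^ s =
          θ ^ s + θ⁻¹ ^ s - (θ ^ (3 ^ h - 1) + θ⁻¹ ^ (3 ^ h - 1)) ∧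
        (-θ - θ⁻¹) ^ s =
          θ ^ s + θ⁻¹ ^ s + (θ ^ (3 ^ h - 1) + θ⁻¹ ^ (3 ^ h - 1))) := by
  have : CharP F 3 := charP_of_card_eq_prime_pow hF
  obtain ⟨solutions, powers⟩ := stmt8_general (R := F) h
  subst hs
  exact ⟨fun x y ↦ by simp [solutions, Units.exists0, and_left_comm],
    fun θ hθ ↦ by simpa using powers (Units.mk0 θ hθ)⟩
end

section
/- Let m be a positive integer with m ≡ 7 (mod 16), q = 3^m, h = (m+1)/8, and s = 3^h + 1. Then s ≡ 4 (mod 8), gcd(s, q²−1) = 4, and gcd(3^h − 1, q²−1) = 2. -/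
/-! Modulo `a ^ 2 - 1` every odd power of `a` is congruent to `a`; with `a = 3` this is the claim
modulo `8`. A common divisor of `a ^ h + 1` and `a ^ (2 * n) - 1` also divides `a ^ (2 * h) - 1`,
hence divides `b ^ 2 - 1` for `b = a ^ gcd h n`. If `h / gcd h n` is odd, then `a ^ h + 1` reduces
modulo `b ^ 2 - 1` to `b + 1`, itself a divisor of `b ^ 2 - 1`. -/

theorem pow_modEq_self_of_odd (a : ℕ) {k : ℕ} (hk : Odd k) : a ^ k ≡ a [MOD a ^ 2 - 1] := by
  obtain ⟨j, rfl⟩ := hk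
  refine ((Nat.modEq_iff_dvd' (Nat.le_self_pow (by lia) a)).mpr ?_).symm
  have factor : a ^ (2 * j + 1) - a = ((a ^ 2) ^ j - 1) * a := by
    rw [pow_succ, pow_mul, Nat.sub_mul, one_mul]
  rw [factor]
  exact (Nat.sub_one_dvd_pow_sub_one (a ^ 2) j).mul_right a

theorem gcd_pow_add_one_sq_sub_one_of_odd (a : ℕ) {k : ℕ} (hk : Odd k) :
    Nat.gcd (a ^ k + 1) (a ^ 2 - 1) = a + 1 := by
  rw [((pow_modEq_self_of_odd a hk).add_right 1).gcd_eq]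
  exact Nat.gcd_eq_left ⟨a - 1, Nat.sq_sub_sq a 1⟩

theorem gcd_pow_add_one_pow_two_mul_sub_one (a : ℕ) {h n : ℕ} (hodd : Odd (h / h.gcd n)) :
    Nat.gcd (a ^ h + 1) (a ^ (2 * n) - 1) = a ^ h.gcd n + 1 := by
  have hdvd : a ^ h + 1 ∣ a ^ (2 * h) - 1 :=
    ⟨a ^ h - 1, by rw [mul_comm 2 h, pow_mul]; exact Nat.sq_sub_sq (a ^ h) 1⟩
  have hpow : a ^ h = (a ^ h.gcd n) ^ (h / h.gcd n) := by
    rw [← pow_mul, Nat.mul_div_cancel' (Nat.gcd_dvd_left h n)]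
  calc Nat.gcd (a ^ h + 1) (a ^ (2 * n) - 1)
      = Nat.gcd (a ^ h + 1) (Nat.gcd (a ^ (2 * h) - 1) (a ^ (2 * n) - 1)) := by
        rw [← Nat.gcd_assoc, Nat.gcd_eq_left hdvd]
    _ = Nat.gcd ((a ^ h.gcd n) ^ (h / h.gcd n) + 1) ((a ^ h.gcd n) ^ 2 - 1) := by
        rw [Nat.pow_sub_one_gcd_pow_sub_one, Nat.gcd_mul_left, mul_comm 2, pow_mul, ← hpow]
    _ = a ^ h.gcd n + 1 := gcd_pow_add_one_sq_sub_one_of_odd _ hodd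

theorem coprime_of_dvd_add_one {d n : ℕ} (hd : d ∣ n + 1) : d.Coprime n :=
  Nat.Coprime.of_dvd_left hd (Nat.coprime_self_add_left.mpr (Nat.coprime_one_left n))

theorem stmt9_general (a : ℕ) {h m : ℕ} (hodd : Odd h) (hcop : h.Coprime m) :
    a ^ h + 1 ≡ a + 1 [MOD a ^ 2 - 1] ∧
    Nat.gcd (a ^ h + 1) ((a ^ m) ^ 2 - 1) = a + 1 ∧
    Nat.gcd (a ^ h - 1) ((a ^ m) ^ 2 - 1) = a - 1 := by
  have hgcd : h.gcd m = 1 := hcop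
  have hgcd_two : h.gcd (2 * m) = 1 := (Nat.coprime_two_right.mpr hodd).mul_right hcop
  rw [← pow_mul, mul_comm m 2]
  refine ⟨(pow_modEq_self_of_odd a hodd).add_right 1, ?_, ?_⟩
  · rw [gcd_pow_add_one_pow_two_mul_sub_one a (by rwa [hgcd, Nat.div_one]), hgcd, pow_one]
  · rw [Nat.pow_sub_one_gcd_pow_sub_one, hgcd_two, pow_one]

/-- if `m ≡ 7 (mod 16)`, `q = 3^m`, `h = (m+1)/8` and `s = 3^h + 1`, then
`s ≡ 4 (mod 8)`, `gcd(s, q²-1) = 4` and `gcd(3^h - 1, q²-1) = 2`. -/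
theorem stmt9 {m : ℕ} (hm : m % 16 = 7)
    (q h s : ℕ) (hq : q = 3 ^ m) (hh : h = (m + 1) / 8) (hs : s = 3 ^ h + 1) :
    s % 8 = 4 ∧
    Nat.gcd s (q ^ 2 - 1) = 4 ∧
    Nat.gcd (3 ^ h - 1) (q ^ 2 - 1) = 2 := by
  subst hq hs
  exact stmt9_general 3 (Nat.odd_iff.mpr (by lia)) (coprime_of_dvd_add_one ⟨8, by lia⟩)
end

section
/- Let m be a positive integer with m ≡ 15 (mod 16) (i.e., m ≡ −1 (mod 16)), q = 3^m, h = (m+1)/8, and s = 3^h + 1. Then s ≡ 2 (mod 8), gcd(s, q²−1) = 2, and gcd(3^h − 1, q²−1) = 8. -/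
/-!
Since `a ^ h + 1` divides `a ^ (2 * h) - 1`, its common divisors with `a ^ n - 1` all divide
`a ^ d - 1`, where `d = gcd (2 * h) n`. If moreover `d ∣ h`, then `a ^ h + 1 ≡ 2` modulo
`a ^ d - 1`, so that the gcd collapses to `gcd 2 (a ^ d - 1)`. For `m + 1 = 8 * h` with `h` even and
`n = 2 * m`, the exponents `h` and `m` are coprime and `d = 2`.
-/

section PowGcd

variable {a d h m n : ℕ}

lemma pow_modEq_one_of_dvd (ha : 0 < a) (hd : d ∣ h) : a ^ h ≡ 1 [MOD a ^ d - 1] :=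
  ((Nat.modEq_iff_dvd' (Nat.one_le_pow _ _ ha)).mpr (Nat.pow_sub_one_dvd_pow_sub_one a hd)).symm

lemma pow_add_one_dvd_pow_two_mul_sub_one (a h : ℕ) : a ^ h + 1 ∣ a ^ (2 * h) - 1 := by
  rw [mul_comm, pow_mul]
  exact ⟨a ^ h - 1, Nat.sq_sub_sq (a ^ h) 1⟩

lemma gcd_pow_add_one_pow_sub_one (ha : 0 < a) (hd : Nat.gcd (2 * h) n ∣ h) :
    Nat.gcd (a ^ h + 1) (a ^ n - 1) = Nat.gcd 2 (a ^ Nat.gcd (2 * h) n - 1) :=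
  calc Nat.gcd (a ^ h + 1) (a ^ n - 1)
    _ = Nat.gcd (a ^ h + 1) (Nat.gcd (a ^ (2 * h) - 1) (a ^ n - 1)) := by
        rw [← Nat.gcd_assoc, Nat.gcd_eq_left (pow_add_one_dvd_pow_two_mul_sub_one a h)]
    _ = Nat.gcd (a ^ h + 1) (a ^ Nat.gcd (2 * h) n - 1) := by
        rw [Nat.pow_sub_one_gcd_pow_sub_one]
    _ = Nat.gcd 2 (a ^ Nat.gcd (2 * h) n - 1) :=
        ((pow_modEq_one_of_dvd ha hd).add_right 1).gcd_eq

theorem stmt10_general (ha : 0 < a) (hh : Even h) (hcop : Nat.Coprime h m) :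
    a ^ h + 1 ≡ 2 [MOD a ^ 2 - 1] ∧
    Nat.gcd (a ^ h + 1) ((a ^ m) ^ 2 - 1) = Nat.gcd 2 (a ^ 2 - 1) ∧
    Nat.gcd (a ^ h - 1) ((a ^ m) ^ 2 - 1) = a ^ 2 - 1 := by
  have hgcd_two_mul : Nat.gcd (2 * h) (2 * m) = 2 := by
    rw [Nat.gcd_mul_left, hcop.gcd_eq_one]
  have hgcd : Nat.gcd h (2 * m) = 2 := by
    rw [hcop.symm.gcd_mul_right_cancel_right, Nat.gcd_eq_right hh.two_dvd]
  rw [← pow_mul, mul_comm m 2]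
  refine ⟨(pow_modEq_one_of_dvd ha hh.two_dvd).add_right 1, ?_, ?_⟩
  · rw [gcd_pow_add_one_pow_sub_one ha (hgcd_two_mul.symm ▸ hh.two_dvd), hgcd_two_mul]
  · rw [Nat.pow_sub_one_gcd_pow_sub_one, hgcd]

end PowGcd

/-- if `m ≡ 15 (mod 16)`, `q = 3^m`, `h = (m+1)/8` and `s = 3^h + 1`, then
`s ≡ 2 (mod 8)`, `gcd(s, q²-1) = 2` and `gcd(3^h - 1, q²-1) = 8`. -/
theorem stmt10 {m : ℕ} (hm : m % 16 = 15)
    (q h s : ℕ) (hq : q = 3 ^ m) (hh : h = (m + 1) / 8) (hs : s = 3 ^ h + 1) :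
    s % 8 = 2 ∧
    Nat.gcd s (q ^ 2 - 1) = 2 ∧
    Nat.gcd (3 ^ h - 1) (q ^ 2 - 1) = 8 := by
  have hdvd : h ∣ m + 1 := ⟨8, by omega⟩
  have hcop : Nat.Coprime h m := Nat.Coprime.coprime_dvd_left hdvd (by simp)
  subst hq hs
  exact stmt10_general three_pos (Nat.even_iff.mpr (by omega)) hcop
end

section
/- Let m ≡ 7 (mod 8), q = 3^m, and v = (3^{(m+1)/8}−1)(3^{(m+1)/4}+1)(3^{(m+1)/2}+1). Then the only x ∈ GF(q) satisfying (x+1)^v − x^v − 1 = 0 is x = 0. -/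
/-!
Write `Q = 3 ^ k` and `a = x ^ v`, where `v * (Q + 1) ≡ 2` modulo `q - 1`. Every `y` in the field
of order `q` then satisfies `(y ^ v) ^ (Q + 1) = y ^ 2`. If `(x + 1) ^ v = a + 1`, taking `y = x`
and `y = x + 1` gives `a ^ Q * a = x ^ 2` and `(a ^ Q + 1) * (a + 1) = (x + 1) ^ 2`, so `a` and
`a ^ Q` are the roots of `(T - x) ^ 2` and both equal `x`. Thus `x` is fixed by `y ↦ y ^ Q`, which
puts it in the prime field `GF(3)` when `k` is coprime to `m`; there every positive even power
equals the square, so `x` and `x + 1` are both idempotent, which leaves only `x = 0`.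

The exponent of the paper is `v = (3 ^ (m + 1) - 1) / (3 ^ k + 1)` with `k = (m + 1) / 8`.
-/

theorem eq_of_mul_eq_sq_of_add_one_mul_add_one_eq_sq {R : Type*} [CommRing R] [IsReduced R]
    {a b x : R} (h : a * b = x ^ 2) (h_succ : (a + 1) * (b + 1) = (x + 1) ^ 2) : a = x := by
  have h_sum : a + b = 2 * x := by linear_combination h_succ - h
  have h_root : (a - x) ^ 2 = 0 := by linear_combination a * h_sum - h
  exact sub_eq_zero.mp (eq_zero_of_pow_eq_zero h_root)

theorem pow_eq_self_and_pow_expChar_pow_eq_self_of_add_one_pow {R : Type*} [CommRing R]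
    [IsReduced R] (p : ℕ) [ExpChar R p] {k v : ℕ} {x : R} (hx : (x ^ v) ^ (p ^ k + 1) = x ^ 2)
    (hx_succ : ((x + 1) ^ v) ^ (p ^ k + 1) = (x + 1) ^ 2) (h : (x + 1) ^ v = x ^ v + 1) :
    x ^ v = x ∧ x ^ p ^ k = x := by
  have h_mul : (x ^ v) ^ p ^ k * x ^ v = x ^ 2 := by rw [← pow_succ, hx]
  have h_mul_succ : ((x ^ v) ^ p ^ k + 1) * (x ^ v + 1) = (x + 1) ^ 2 := by
    rw [← hx_succ, h, pow_succ, add_pow_expChar_pow, one_pow]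
  have h_conj : (x ^ v) ^ p ^ k = x :=
    eq_of_mul_eq_sq_of_add_one_mul_add_one_eq_sq h_mul h_mul_succ
  have h_self : x ^ v = x :=
    eq_of_mul_eq_sq_of_add_one_mul_add_one_eq_sq
      (by rw [mul_comm, h_mul]) (by rw [mul_comm, h_mul_succ])
  exact ⟨h_self, by rwa [h_self] at h_conj⟩

theorem pow_pow_gcd_eq_self {M : Type*} [Monoid M] {p m n : ℕ} {x : M}
    (hm : x ^ p ^ m = x) (hn : x ^ p ^ n = x) : x ^ p ^ m.gcd n = x := by
  have periodic_iff (l : ℕ) : Function.IsPeriodicPt (· ^ p) l x ↔ x ^ p ^ l = x := by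
    rw [Function.IsPeriodicPt, Function.IsFixedPt, pow_iterate]
  exact (periodic_iff _).mp (((periodic_iff m).mpr hm).gcd ((periodic_iff n).mpr hn))

theorem pow_eq_sq_of_pow_three_eq_self {M : Type*} [Monoid M] {x : M} (hx : x ^ 3 = x) {n : ℕ}
    (hn : Even n) (hn0 : n ≠ 0) : x ^ n = x ^ 2 := by
  obtain ⟨l, rfl⟩ := hn.two_dvd
  obtain ⟨j, rfl⟩ := Nat.exists_eq_succ_of_ne_zero (right_ne_zero_of_mul hn0)
  have h_idem : IsIdempotentElem (x ^ 2) := by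
    rw [IsIdempotentElem, ← pow_add, pow_succ x 3, hx, ← pow_two]
  rw [pow_mul, h_idem.pow_succ_eq]

theorem eq_zero_of_pow_eq_self_of_add_one_pow_eq_self {R : Type*} [CommRing R] [CharP R 3]
    {n : ℕ} (hn : Even n) (hn0 : n ≠ 0) {x : R} (hx3 : x ^ 3 = x) (hx : x ^ n = x)
    (hx_succ : (x + 1) ^ n = x + 1) : x = 0 := by
  have h3 : (3 : R) = 0 := CharP.ofNat_eq_zero R 3
  have hx3_succ : (x + 1) ^ 3 = x + 1 := by linear_combination hx3 + (x ^ 2 + x) * h3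
  rw [pow_eq_sq_of_pow_three_eq_self hx3 hn hn0] at hx
  rw [pow_eq_sq_of_pow_three_eq_self hx3_succ hn hn0] at hx_succ
  linear_combination x * h3 + hx - hx_succ

theorem pow_eq_pow_of_modEq_card_sub_one_s12 {F : Type*} [GroupWithZero F] [Fintype F] {a b : ℕ}
    (ha : a ≠ 0) (hb : b ≠ 0) (h : a ≡ b [MOD Fintype.card F - 1]) (x : F) : x ^ a = x ^ b := by
  rcases eq_or_ne x 0 with rfl | hx
  · rw [zero_pow ha, zero_pow hb]
  · exact pow_eq_pow_of_modEq h (FiniteField.pow_card_sub_one_eq_one x hx)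

theorem stmt12_general {m k v : ℕ} {F : Type*} [Field F] [Fintype F]
    (hF : Fintype.card F = 3 ^ m) (hk : k.Coprime m) (hv : Even v) (hv0 : v ≠ 0)
    (hvk : v * (3 ^ k + 1) ≡ 2 [MOD 3 ^ m - 1]) (x : F) :
    (x + 1) ^ v - x ^ v - 1 = 0 ↔ x = 0 := by
  have : Fact (Nat.Prime 3) := ⟨Nat.prime_three⟩
  have : CharP F 3 := charP_of_card_eq_prime_pow hF
  refine ⟨fun h => ?_, fun hx => by simp [hx, hv0]⟩
  have h_add : (x + 1) ^ v = x ^ v + 1 := by linear_combination h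
  have h_sq (y : F) : (y ^ v) ^ (3 ^ k + 1) = y ^ 2 := by
    rw [← pow_mul]
    exact pow_eq_pow_of_modEq_card_sub_one_s12 (mul_ne_zero hv0 (Nat.succ_ne_zero _))
      two_ne_zero (hF ▸ hvk) y
  obtain ⟨hxv, hxk⟩ :=
    pow_eq_self_and_pow_expChar_pow_eq_self_of_add_one_pow 3 (h_sq x) (h_sq (x + 1)) h_add
  have hxm : x ^ 3 ^ m = x := hF ▸ FiniteField.pow_card x
  have hx3 : x ^ 3 = x := by simpa only [hk.gcd_eq_one, pow_one] using pow_pow_gcd_eq_self hxk hxm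
  exact eq_zero_of_pow_eq_self_of_add_one_pow_eq_self hv hv0 hx3 hxv (by rw [h_add, hxv])

theorem pow_succ_sub_one_modEq {b : ℕ} (hb : 0 < b) (m : ℕ) :
    b ^ (m + 1) - 1 ≡ b - 1 [MOD b ^ m - 1] := by
  have h_split : b ^ (m + 1) - 1 = b - 1 + (b ^ m - 1) * b := by
    have h_pos : 0 < b ^ m := pow_pos hb m
    have h_le : b ≤ b ^ m * b := Nat.le_mul_of_pos_left b h_pos
    rw [pow_succ, Nat.sub_mul]
    omega
  rw [h_split]
  exact Nat.add_modulus_mul_modEq_iff.mpr rfl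

theorem sub_one_dvd_of_mul_add_one_eq_pow_sub_one {b n v : ℕ} (hn : Even n)
    (hv : v * (b + 1) = b ^ n - 1) : b - 1 ∣ v := by
  obtain ⟨j, rfl⟩ := hn.two_dvd
  have h_dvd : b ^ 2 - 1 ∣ b ^ (2 * j) - 1 := Nat.pow_sub_one_dvd_pow_sub_one b ⟨j, rfl⟩
  have h_factor : b ^ 2 - 1 = (b - 1) * (b + 1) := by
    simpa only [one_pow, mul_comm] using Nat.sq_sub_sq b 1
  rw [← hv, h_factor] at h_dvd
  exact Nat.dvd_of_mul_dvd_mul_right b.succ_pos h_dvd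

theorem add_one_pow_sub_pow_sub_one_eq_zero_iff_of_mul_eq {m k v : ℕ} {F : Type*} [Field F]
    [Fintype F] (hF : Fintype.card F = 3 ^ m) (hk : 2 * k ∣ m + 1)
    (hv : v * (3 ^ k + 1) = 3 ^ (m + 1) - 1) (x : F) : (x + 1) ^ v - x ^ v - 1 = 0 ↔ x = 0 := by
  have hk_coprime : k.Coprime m :=
    Nat.Coprime.of_dvd_left (dvd_of_mul_left_dvd hk) (Nat.coprime_self_add_left.mpr (by simp))
  have hv_even : Even v := by
    obtain ⟨j, hj⟩ := hk
    have h_pow : v * (3 ^ k + 1) = (3 ^ k) ^ (2 * j) - 1 := by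
      rw [hv, hj, mul_comm 2 k, mul_assoc, pow_mul]
    have h_even : Even (3 ^ k - 1) := (Odd.pow (by decide)).tsub_odd odd_one
    exact h_even.trans_dvd (sub_one_dvd_of_mul_add_one_eq_pow_sub_one (even_two_mul j) h_pow)
  have hv0 : v ≠ 0 := by
    rintro rfl
    have : 1 < 3 ^ (m + 1) := Nat.one_lt_pow m.succ_ne_zero (by norm_num)
    omega
  exact stmt12_general hF hk_coprime hv_even hv0 (hv ▸ pow_succ_sub_one_modEq three_pos m) x

theorem pow_div_eight_sub_one_mul_mul_mul_eq_pow_sub_one {b n : ℕ} (hn : 8 ∣ n) :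
    (b ^ (n / 8) - 1) * (b ^ (n / 4) + 1) * (b ^ (n / 2) + 1) * (b ^ (n / 8) + 1) = b ^ n - 1 := by
  obtain ⟨k, rfl⟩ := hn
  rw [show 8 * k / 8 = k by omega, show 8 * k / 4 = k * 2 by omega,
    show 8 * k / 2 = k * 4 by omega, mul_comm 8 k, pow_mul, pow_mul, pow_mul]
  cases b ^ k with
  | zero => rfl
  | succ c => exact Nat.eq_sub_of_add_eq (by rw [Nat.add_sub_cancel]; ring)

/-- for `m ≡ 7 (mod 8)`, `q = 3^m` and
`v = (3^{(m+1)/8}-1)(3^{(m+1)/4}+1)(3^{(m+1)/2}+1)`, the only `x ∈ GF(q)` satisfying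
`(x+1)^v - x^v - 1 = 0` is `x = 0`. -/
theorem stmt12 {m : ℕ} (hm : m % 8 = 7)
    {F : Type*} [Field F] [Fintype F] (hF : Fintype.card F = 3 ^ m)
    (v : ℕ)
    (hv : v = (3 ^ ((m + 1) / 8) - 1) * (3 ^ ((m + 1) / 4) + 1) * (3 ^ ((m + 1) / 2) + 1)) :
    ∀ x : F, ((x + 1) ^ v - x ^ v - 1 = 0 ↔ x = 0) :=
  add_one_pow_sub_pow_sub_one_eq_zero_iff_of_mul_eq hF ⟨4, by omega⟩
    (hv ▸ pow_div_eight_sub_one_mul_mul_mul_eq_pow_sub_one (by omega))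
end

section
/- Let m ≡ 7 (mod 8), q = 3^m, and v = (3^{(m+1)/8}−1)(3^{(m+1)/4}+1)(3^{(m+1)/2}+1). Then the code D = {c ∈ GF(3)^{q−1} : Σ_{i=0}^{q−2} c_i α^i = 0 and Σ_{i=0}^{q−2} c_i α^{iv} = 0 in GF(q)} is a GF(3)-linear subspace of GF(3)^{q−1} of dimension 3^m − 1 − 2m whose minimum nonzero Hamming weight is 4. -/
/-!
Both checks evaluate a word at the points `x` and `x ^ v` of the field. The exponent `v` is even
and satisfies `v * (3 ^ k + 1) ≡ 2 [MOD 3 ^ m - 1]` with `k` prime to `m`, so that, with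
`σ = (· ^ 3 ^ k)`, every `x ≠ 0` has `x ^ v * σ (x ^ v) = x ^ 2`, and `σ` fixes only `GF(3)`.

* No word has weight three: scaling the terms of the two checks gives nonzero `A + B + C = 0` and
  `x + y + z = 0` with `A * σ A = x ^ 2`, and similarly for `y` and `z`. Expanding
  `(A + B) * σ (A + B) = (x + y) ^ 2` gives `A * σ B + σ A * B = 2 * x * y`, while
  `(A * σ B) * (σ A * B) = (x * y) ^ 2`; so `A * σ B = σ A * B`, that is, `σ` fixes `A / B`. Hence
  `A = ± B`, which forces `A = B` and then `x = y`. Weights one and two are immediate.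
* The two checks are independent: differences of `(x, x ^ v)` and `(-x, x ^ v)` span the first
  factor, and `(x * σ x) ^ v = x ^ 2` puts all squares, hence everything, in the second.
* There are more than `|GF(q)| ^ 2` words of weight two, so two of them have the same checks.
-/

open Finset

section Hamming

variable {ι R : Type*} [Fintype ι] [DecidableEq R]

theorem hammingNorm_neg_add_le [AddGroup R] (c d : ι → R) :
    hammingNorm (-c + d) ≤ hammingNorm c + hammingNorm d := by
  rw [← hammingDist_eq_hammingNorm, ← hammingDist_zero_right c, ← hammingDist_zero_left]
  exact hammingDist_triangle c 0 d

theorem card_filter_support_eq [DecidableEq ι] [Fintype R] [Zero R] (s : Finset ι) :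
    #{c : ι → R | ({i | c i ≠ 0} : Finset ι) = s} = (Fintype.card R - 1) ^ #s := by
  have h : ({c : ι → R | ({i | c i ≠ 0} : Finset ι) = s} : Finset (ι → R)) =
      Fintype.piFinset fun i => if i ∈ s then {0}ᶜ else {0} := by
    ext c
    simp only [mem_filter_univ, Finset.ext_iff, Fintype.mem_piFinset]
    refine forall_congr' fun i => ?_
    split_ifs with hi <;> simp [hi]
  rw [h, Fintype.card_piFinset]
  simp [apply_ite Finset.card, card_compl]

theorem card_filter_hammingNorm_eq [DecidableEq ι] [Fintype R] [Zero R] (w : ℕ) :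
    #{c : ι → R | hammingNorm c = w} =
      (Fintype.card ι).choose w * (Fintype.card R - 1) ^ w := by
  have hmaps : Set.MapsTo (fun c : ι → R => ({i | c i ≠ 0} : Finset ι))
      ({c : ι → R | hammingNorm c = w} : Finset (ι → R)) (powersetCard w (univ : Finset ι)) := by
    intro c hc
    simpa [mem_powersetCard, hammingNorm] using hc
  have hfiber : ∀ s ∈ powersetCard w (univ : Finset ι),
      #{c ∈ ({c : ι → R | hammingNorm c = w} : Finset (ι → R)) |
        ({i | c i ≠ 0} : Finset ι) = s} = (Fintype.card R - 1) ^ w := by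
    intro s hs
    obtain ⟨-, hs⟩ := mem_powersetCard.1 hs
    rw [← hs, ← card_filter_support_eq s, filter_filter]
    congr 1
    refine filter_congr fun c _ => and_iff_right_of_imp fun hc => ?_
    rw [← hc, hammingNorm]
  rw [card_eq_sum_card_fiberwise hmaps, sum_congr rfl hfiber, sum_const, card_powersetCard,
    card_univ, smul_eq_mul]

theorem exists_ne_zero_map_eq_zero_hammingNorm_le [Fintype R] [AddGroup R] {A : Type*}
    [AddGroup A] [Fintype A] (f : (ι → R) →+ A) {w : ℕ}
    (h : Fintype.card A < (Fintype.card ι).choose w * (Fintype.card R - 1) ^ w) :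
    ∃ c ≠ 0, f c = 0 ∧ hammingNorm c ≤ 2 * w := by
  classical
  rw [← card_filter_hammingNorm_eq, ← card_univ] at h
  obtain ⟨c, hc, d, hd, hcd, hf⟩ :=
    exists_ne_map_eq_of_card_lt_of_maps_to h (f := f) fun _ _ => mem_coe.2 (mem_univ _)
  rw [mem_filter_univ] at hc hd
  refine ⟨-c + d, fun h0 => hcd (neg_add_eq_zero.1 h0), ?_, ?_⟩
  · rw [map_add, map_neg, hf, neg_add_cancel]
  · have := hammingNorm_neg_add_le c d
    omega

end Hamming

section FiniteStructures

theorem pow_eq_self_of_coprime {M : Type*} [Monoid M] {p k m : ℕ} (hkm : k.Coprime m) {t : M}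
    (hk : t ^ p ^ k = t) (hm : t ^ p ^ m = t) : t ^ p = t := by
  have hper : ∀ {j : ℕ}, t ^ p ^ j = t → Function.IsPeriodicPt (fun x : M => x ^ p) j t := by
    intro j hj
    rwa [Function.IsPeriodicPt, Function.IsFixedPt, pow_iterate]
  have h := (hper hk).gcd (hper hm)
  rwa [hkm.gcd_eq_one, Function.IsPeriodicPt, Function.iterate_one] at h

theorem pow_mul_pow_pow_eq_sq_of_modEq {F : Type*} [Field F] [Fintype F] {v n : ℕ}
    (h : v * (n + 1) ≡ 2 [MOD Fintype.card F - 1]) {x : F} (hx : x ≠ 0) :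
    x ^ v * (x ^ v) ^ n = x ^ 2 := by
  rw [← pow_succ', ← pow_mul]
  exact pow_eq_pow_of_modEq h (FiniteField.pow_card_sub_one_eq_one x hx)

theorem zmod_three_pow_eq_one_of_even {v : ℕ} (hv : Even v) {e : ZMod 3} (he : e ≠ 0) :
    e ^ v = 1 := by
  obtain ⟨n, rfl⟩ := hv.two_dvd
  have hsq : e ^ 2 = 1 := ZMod.pow_card_sub_one_eq_one he
  rw [pow_mul, hsq, one_pow]

theorem finrank_eq_of_card_eq_pow {K V : Type*} [Field K] [Fintype K] [AddCommGroup V] [Module K V]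
    [Fintype V] {m : ℕ} (h : Fintype.card V = Fintype.card K ^ m) : Module.finrank K V = m :=
  Nat.pow_right_injective Fintype.one_lt_card (Module.card_eq_pow_finrank.symm.trans h)

theorem bijective_pow_fin {G : Type*} [Group G] [Finite G] {g : G}
    (hg : ∀ x, x ∈ Subgroup.zpowers g) {n : ℕ} (hn : Nat.card G = n) :
    Function.Bijective fun i : Fin n => g ^ (i : ℕ) := by
  have hord : orderOf g = n := (orderOf_eq_card_of_forall_mem_zpowers hg).trans hn
  rw [Nat.bijective_iff_injective_and_card, Nat.card_fin, hn]
  exact ⟨fun i j hij => Fin.ext (pow_injOn_Iio_orderOf (hord ▸ i.2) (hord ▸ j.2) hij), rfl⟩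

end FiniteStructures

section ShortRelations

variable {F : Type*} [Field F]

theorem eq_of_add_eq_zero_of_mul_map_eq_sq {σ : F →+* F} (hσ : ∀ t, σ t = t → t ^ 3 = t)
    {A B C x y z : F} (hA : A ≠ 0) (hB : B ≠ 0) (hC : C ≠ 0) (hz : z ≠ 0)
    (hABC : A + B + C = 0) (hxyz : x + y + z = 0)
    (hx : A * σ A = x ^ 2) (hy : B * σ B = y ^ 2) (hCz : C * σ C = z ^ 2) :
    A = B ∧ x = y := by
  have hC' : C = -(A + B) := by linear_combination hABC
  have hz' : z = -(x + y) := by linear_combination hxyz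
  have hcross : A * σ B + σ A * B = 2 * (x * y) := by
    rw [hC', hz', map_neg, map_add] at hCz
    linear_combination hCz - hx - hy
  have hsq : (A * σ B - σ A * B) ^ 2 = 0 := by
    linear_combination (A * σ B + σ A * B + 2 * (x * y)) * hcross - 4 * B * σ B * hx
      - 4 * x ^ 2 * hy
  have hfixed : σ (A / B) = A / B := by
    rw [map_div₀, div_eq_div_iff ((map_ne_zero σ).2 hB) hB]
    linear_combination -(pow_eq_zero_iff two_ne_zero).1 hsq
  have hratio : (A / B) ^ 2 = 1 :=
    mul_right_cancel₀ (div_ne_zero hA hB) (by linear_combination hσ _ hfixed)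
  have hAB : A = B := by
    rw [div_pow, div_eq_one_iff_eq (pow_ne_zero 2 hB), sq_eq_sq_iff_eq_or_eq_neg] at hratio
    exact hratio.resolve_right fun h => hC (by rw [hC', h, neg_add_cancel, neg_zero])
  refine ⟨hAB, (sq_eq_sq_iff_eq_or_eq_neg.1 ?_).resolve_right fun h => hz ?_⟩
  · rw [← hx, ← hy, hAB]
  · rw [hz', h, neg_add_cancel, neg_zero]

theorem eq_of_smul_eq_smul_of_smul_pow_eq_smul_pow {K : Type*} [Field K] [Algebra K F] {v : ℕ}
    (hv : ∀ e : K, e ≠ 0 → e ^ v = 1) {a b : K} (ha : a ≠ 0) (hb : b ≠ 0) {x y : F} (hx : x ≠ 0)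
    (h : a • x = b • y) (h' : a • x ^ v = b • y ^ v) : x = y := by
  have hpow : x ^ v = y ^ v := by
    simpa only [smul_pow, hv a ha, hv b hb, one_smul] using congrArg (· ^ v) h
  have hab : a = b := smul_left_injective K (pow_ne_zero v hx) (by simpa only [← hpow] using h')
  exact smul_right_injective F ha (by simpa only [← hab] using h)

variable [Algebra (ZMod 3) F] {v : ℕ}

theorem eq_of_three_smul_eq_zero (hv : Even v) {σ : F →+* F} (hσ : ∀ t, σ t = t → t ^ 3 = t)
    (hσv : ∀ x : F, x ≠ 0 → x ^ v * σ (x ^ v) = x ^ 2)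
    {a b c : ZMod 3} (ha : a ≠ 0) (hb : b ≠ 0) (hc : c ≠ 0)
    {x y z : F} (hx : x ≠ 0) (hy : y ≠ 0) (hz : z ≠ 0)
    (h : a • x + b • y + c • z = 0) (h' : a • x ^ v + b • y ^ v + c • z ^ v = 0) : x = y := by
  have hsmul_pow : ∀ (e : ZMod 3) {t : F}, t ≠ 0 → e • t ^ v * σ (e • t ^ v) = (e • t) ^ 2 := by
    intro e t ht
    rw [ZMod.map_smul σ, smul_mul_smul_comm, hσv t ht, smul_pow, sq e]
  have hterm : ∀ {e : ZMod 3} {t : F}, e ≠ 0 → t ≠ 0 → e • t ^ v ≠ 0 :=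
    fun he ht => smul_ne_zero he (pow_ne_zero v ht)
  obtain ⟨hpow, hxy⟩ := eq_of_add_eq_zero_of_mul_map_eq_sq hσ (hterm ha hx) (hterm hb hy)
    (hterm hc hz) (smul_ne_zero hc hz) h' h (hsmul_pow a hx) (hsmul_pow b hy) (hsmul_pow c hz)
  exact eq_of_smul_eq_smul_of_smul_pow_eq_smul_pow
    (fun _ => zmod_three_pow_eq_one_of_even hv) ha hb hx hxy hpow

end ShortRelations

theorem succ_sq_lt_choose_two_mul {n : ℕ} (hn : 5 ≤ n) : (n + 1) ^ 2 < n.choose 2 * 2 ^ 2 := by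
  induction n, hn using Nat.le_induction with
  | base => decide
  | succ n hn ih =>
    rw [Nat.choose_succ_succ' n 1, Nat.choose_one_right]
    linarith

section Code

variable (K : Type*) {F ι : Type*} [Field K] [Field F] [Algebra K F] [Fintype ι]

/-- The parity-check map `c ↦ (∑ i, c i • x i, ∑ i, c i • x i ^ v)` on words over `K` whose
coordinates are indexed by nonzero points `x i` of the extension field `F`. -/
def monomialCheckMap (x : ι → Fˣ) (v : ℕ) : (ι → K) →ₗ[K] F × F :=
  Fintype.linearCombination K fun i => ((x i : F), (x i : F) ^ v)

/-- The linear code over `K` cut out by the two checks of `monomialCheckMap`. When `x` lists the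
powers of a generator of `Fˣ`, it is the dual of the cyclic code `C_(1,v)`. -/
def monomialDualCode (x : ι → Fˣ) (v : ℕ) : Submodule K (ι → K) :=
  LinearMap.ker (monomialCheckMap K x v)

variable {K} {x : ι → Fˣ} {v : ℕ}

theorem mem_monomialDualCode {c : ι → K} :
    c ∈ monomialDualCode K x v ↔
      ∑ i, c i • (x i : F) = 0 ∧ ∑ i, c i • (x i : F) ^ v = 0 := by
  simp only [monomialDualCode, monomialCheckMap, LinearMap.mem_ker,
    Fintype.linearCombination_apply, Prod.ext_iff, Prod.fst_sum, Prod.snd_sum, Prod.smul_fst,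
    Prod.smul_snd, Prod.fst_zero, Prod.snd_zero]

theorem mk_pow_mem_range_monomialCheckMap (hx : Function.Surjective x) {y : F} (hy : y ≠ 0) :
    (y, y ^ v) ∈ LinearMap.range (monomialCheckMap K x v) := by
  classical
  obtain ⟨i, hi⟩ := hx (Units.mk0 y hy)
  refine ⟨Pi.single i 1, ?_⟩
  rw [monomialCheckMap, Fintype.linearCombination_apply_single, one_smul, hi, Units.val_mk0]

theorem mk_zero_mem_range_monomialCheckMap (h2 : (2 : F) ≠ 0) (hx : Function.Surjective x)
    (hv : Even v) (y : F) : (y, 0) ∈ LinearMap.range (monomialCheckMap K x v) := by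
  rcases eq_or_ne y 0 with rfl | hy
  · exact zero_mem _
  have hy2 : y / 2 ≠ 0 := div_ne_zero hy h2
  have h := sub_mem (mk_pow_mem_range_monomialCheckMap (K := K) (v := v) hx hy2)
    (mk_pow_mem_range_monomialCheckMap hx (neg_ne_zero.2 hy2))
  have hhalves : y / 2 - -(y / 2) = y := by field_simp; ring
  rwa [Prod.mk_sub_mk, hv.neg_pow, sub_self, hhalves] at h

theorem monomialCheckMap_surjective (h2 : (2 : F) ≠ 0) (hx : Function.Surjective x) (hv : Even v)
    {σ : F →+* F} (hσv : ∀ x : F, x ≠ 0 → x ^ v * σ (x ^ v) = x ^ 2) :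
    Function.Surjective (monomialCheckMap K x v) := by
  rw [← LinearMap.range_eq_top, eq_top_iff]
  have hfst := mk_zero_mem_range_monomialCheckMap (K := K) h2 hx hv
  have hsq : ∀ y : F, ((0 : F), y ^ 2) ∈ LinearMap.range (monomialCheckMap K x v) := by
    intro y
    rcases eq_or_ne y 0 with rfl | hy
    · rw [zero_pow two_ne_zero]
      exact zero_mem _
    have hpow : (y * σ y) ^ v = y ^ 2 := by rw [mul_pow, ← map_pow, hσv y hy]
    have hyσ : y * σ y ≠ 0 := mul_ne_zero hy ((map_ne_zero σ).2 hy)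
    have h := sub_mem (mk_pow_mem_range_monomialCheckMap hx hyσ) (hfst (y * σ y))
    rwa [Prod.mk_sub_mk, sub_self, sub_zero, hpow] at h
  have hsnd : ∀ y : F, ((0 : F), y) ∈ LinearMap.range (monomialCheckMap K x v) := by
    intro y
    have hdiff : (y / 2 + 1) ^ 2 - (y / 2) ^ 2 - 1 ^ 2 = y := by field_simp; ring
    have h := sub_mem (sub_mem (hsq (y / 2 + 1)) (hsq (y / 2))) (hsq 1)
    rwa [Prod.mk_sub_mk, Prod.mk_sub_mk, sub_zero, sub_zero, hdiff] at h
  rintro ⟨y, z⟩ -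
  simpa only [Prod.mk_add_mk, add_zero, zero_add] using add_mem (hfst y) (hsnd z)

theorem finrank_monomialDualCode [Module.Finite K F]
    (h : Function.Surjective (monomialCheckMap K x v)) :
    Module.finrank K (monomialDualCode K x v) = Fintype.card ι - 2 * Module.finrank K F := by
  have hrank := LinearMap.finrank_range_add_finrank_ker (monomialCheckMap K x v)
  rw [LinearMap.range_eq_top.2 h, finrank_top, Module.finrank_prod, Module.finrank_pi] at hrank
  rw [monomialDualCode]
  omega

theorem four_le_hammingNorm_of_mem_monomialDualCode [Algebra (ZMod 3) F]
    (hx : Function.Injective x) (hv : Even v) {σ : F →+* F} (hσ : ∀ t, σ t = t → t ^ 3 = t)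
    (hσv : ∀ x : F, x ≠ 0 → x ^ v * σ (x ^ v) = x ^ 2) {c : ι → ZMod 3}
    (hc : c ∈ monomialDualCode (ZMod 3) x v) (hc0 : c ≠ 0) : 4 ≤ hammingNorm c := by
  classical
  have hsupport : ∀ f : ι → F, ∑ i, c i • f i = ∑ i with c i ≠ 0, c i • f i := fun f =>
    (sum_filter_of_ne fun i _ h => left_ne_zero_of_smul h).symm
  obtain ⟨h, h'⟩ := mem_monomialDualCode.1 hc
  rw [hsupport] at h h'
  have hne : ∀ i, (x i : F) ≠ 0 := fun i => (x i).ne_zero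
  have hpos : hammingNorm c ≠ 0 := hammingNorm_ne_zero_iff.2 hc0
  have hmem : ∀ {i}, i ∈ ({i | c i ≠ 0} : Finset ι) → c i ≠ 0 := (mem_filter_univ _).1
  by_contra! hlt
  rw [hammingNorm] at hpos hlt
  generalize ({i | c i ≠ 0} : Finset ι) = S at *
  obtain hS | hS | hS : #S = 1 ∨ #S = 2 ∨ #S = 3 := by omega
  · obtain ⟨i, rfl⟩ := card_eq_one.1 hS
    rw [sum_singleton] at h
    exact smul_ne_zero (hmem (by simp)) (hne i) h
  · obtain ⟨i, j, hij, rfl⟩ := card_eq_two.1 hS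
    rw [sum_pair hij, add_eq_zero_iff_eq_neg, ← neg_smul] at h h'
    exact hij <| hx <| Units.ext <| eq_of_smul_eq_smul_of_smul_pow_eq_smul_pow
      (fun _ => zmod_three_pow_eq_one_of_even hv) (hmem (by simp))
      (neg_ne_zero.2 (hmem (by simp))) (hne i) h h'
  · obtain ⟨i, j, l, hij, hil, hjl, rfl⟩ := card_eq_three.1 hS
    rw [sum_insert (by simp [hij, hil]), sum_pair hjl, ← add_assoc] at h h'
    exact hij <| hx <| Units.ext <| eq_of_three_smul_eq_zero hv hσ hσv (hmem (by simp))
      (hmem (by simp)) (hmem (by simp)) (hne i) (hne j) (hne l) h h'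

theorem exists_mem_monomialDualCode_hammingNorm_le_four [Algebra (ZMod 3) F] [Finite F]
    (hx : Function.Surjective x) (hι : 5 ≤ Fintype.card ι) :
    ∃ c ∈ monomialDualCode (ZMod 3) x v, c ≠ 0 ∧ hammingNorm c ≤ 4 := by
  classical
  have := Fintype.ofFinite F
  have hF : Fintype.card F ≤ Fintype.card ι + 1 := by
    have := Fintype.card_le_of_surjective x hx
    rw [Fintype.card_units] at this
    omega
  have hcard : Fintype.card (F × F) <
      (Fintype.card ι).choose 2 * (Fintype.card (ZMod 3) - 1) ^ 2 :=
    calc Fintype.card (F × F) = Fintype.card F ^ 2 := by rw [Fintype.card_prod, sq]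
      _ ≤ (Fintype.card ι + 1) ^ 2 := Nat.pow_le_pow_left hF 2
      _ < _ := succ_sq_lt_choose_two_mul hι
  obtain ⟨c, hc0, hc, hle⟩ := exists_ne_zero_map_eq_zero_hammingNorm_le
    (monomialCheckMap (ZMod 3) x v).toAddMonoidHom hcard
  exact ⟨c, hc, hc0, hle⟩

end Code

section Exponent

theorem pow_sub_one_mul_eq_pow_eight_mul_sub_one {b : ℕ} (hb : 0 < b) (k : ℕ) :
    (b ^ k - 1) * (b ^ (2 * k) + 1) * (b ^ (4 * k) + 1) * (b ^ k + 1) = b ^ (8 * k) - 1 := by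
  zify [Nat.one_le_pow k b hb, Nat.one_le_pow (8 * k) b hb]
  ring

theorem coprime_succ_div_self {d m : ℕ} (hd : d ∣ m + 1) : ((m + 1) / d).Coprime m :=
  (Nat.coprime_self_add_left.2 (Nat.coprime_one_left m)).coprime_dvd_left (Nat.div_dvd_of_dvd hd)

theorem exponent_mul_modEq_two {m : ℕ} (hm : m % 8 = 7) :
    (3 ^ ((m + 1) / 8) - 1) * (3 ^ ((m + 1) / 4) + 1) * (3 ^ ((m + 1) / 2) + 1) *
      (3 ^ ((m + 1) / 8) + 1) ≡ 2 [MOD 3 ^ m - 1] := by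
  obtain ⟨k, hk⟩ : 8 ∣ m + 1 := by omega
  have h8 : (m + 1) / 8 = k := by omega
  have h4 : (m + 1) / 4 = 2 * k := by omega
  have h2 : (m + 1) / 2 = 4 * k := by omega
  have hsplit : 3 ^ (m + 1) - 1 = 2 + (3 ^ m - 1) * 3 := by
    have : 0 < 3 ^ m := by positivity
    rw [pow_succ]
    omega
  rw [h8, h4, h2, pow_sub_one_mul_eq_pow_eight_mul_sub_one three_pos, ← hk, hsplit]
  exact Nat.add_modulus_mul_modEq_iff.2 rfl

end Exponent

theorem stmt13_general {m k v : ℕ} (hm : 1 < m) (hk : k.Coprime m) (hve : Even v)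
    (hv : v * (3 ^ k + 1) ≡ 2 [MOD 3 ^ m - 1])
    {F : Type*} [Field F] [Fintype F] [Algebra (ZMod 3) F] (hF : Fintype.card F = 3 ^ m)
    (α : Fˣ) (hα : ∀ x : Fˣ, x ∈ Subgroup.zpowers α) :
    ∃ D : Submodule (ZMod 3) (Fin (3 ^ m - 1) → ZMod 3),
      (D : Set (Fin (3 ^ m - 1) → ZMod 3)) =
        {c | (∑ i : Fin (3 ^ m - 1), algebraMap (ZMod 3) F (c i) * (α : F) ^ (i : ℕ) = 0) ∧
             (∑ i : Fin (3 ^ m - 1), algebraMap (ZMod 3) F (c i) * (α : F) ^ ((i : ℕ) * v) = 0)} ∧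
      Module.finrank (ZMod 3) D = 3 ^ m - 1 - 2 * m ∧
      (∀ c : Fin (3 ^ m - 1) → ZMod 3, c ∈ D → c ≠ 0 → 4 ≤ hammingNorm c) ∧
      (∃ c : Fin (3 ^ m - 1) → ZMod 3, c ∈ D ∧ c ≠ 0 ∧ hammingNorm c = 4) := by
  have : CharP F 3 := charP_of_injective_algebraMap (algebraMap (ZMod 3) F).injective 3
  have h2 : (2 : F) ≠ 0 := Ring.two_ne_zero (by rw [ringChar.eq F 3]; decide)
  have hx := bijective_pow_fin hα (n := 3 ^ m - 1)
    (by rw [Nat.card_units, Nat.card_eq_fintype_card, hF])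
  have hσv : ∀ x : F, x ≠ 0 → x ^ v * iterateFrobenius F 3 k (x ^ v) = x ^ 2 := fun x hx =>
    pow_mul_pow_pow_eq_sq_of_modEq (by rwa [hF]) hx
  have hσ : ∀ t : F, iterateFrobenius F 3 k t = t → t ^ 3 = t := fun t ht =>
    pow_eq_self_of_coprime hk ht (by rw [← hF, FiniteField.pow_card])
  have hrank : Module.finrank (ZMod 3) F = m :=
    finrank_eq_of_card_eq_pow (by rw [hF, ZMod.card])
  have hmin := fun c => four_le_hammingNorm_of_mem_monomialDualCode (c := c) hx.1 hve hσ hσv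
  refine ⟨monomialDualCode (ZMod 3) (fun i => α ^ (i : ℕ)) v, ?_, ?_, hmin, ?_⟩
  · ext c
    simp only [SetLike.mem_coe, mem_monomialDualCode, Set.mem_ofPred_eq, Algebra.smul_def,
      Units.val_pow_eq_pow_val, pow_mul]
  · rw [finrank_monomialDualCode (monomialCheckMap_surjective h2 hx.2 hve hσv), hrank,
      Fintype.card_fin]
  · have hlen : 5 ≤ Fintype.card (Fin (3 ^ m - 1)) := by
      have := Nat.pow_le_pow_right (n := 3) (by norm_num) hm
      rw [Fintype.card_fin]
      omega
    obtain ⟨c, hc, hc0, hle⟩ := exists_mem_monomialDualCode_hammingNorm_le_four hx.2 hlen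
    exact ⟨c, hc, hc0, hle.antisymm (hmin c hc hc0)⟩

/-- with `m ≡ 7 (mod 8)`, `q = 3^m`,
`v = (3^{(m+1)/8}-1)(3^{(m+1)/4}+1)(3^{(m+1)/2}+1)` and `α` a generator of `GF(q)*`, the
dual code `D = {c ∈ GF(3)^{q-1} : Σ c_i α^i = 0 ∧ Σ c_i α^{iv} = 0}` is a `GF(3)`-linear
subspace of dimension `3^m - 1 - 2m` whose minimum nonzero Hamming weight is `4`. -/
theorem stmt13 {m : ℕ} (hm : m % 8 = 7)
    {F : Type*} [Field F] [Fintype F] [Algebra (ZMod 3) F]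
    (hF : Fintype.card F = 3 ^ m)
    (α : Fˣ) (hα : ∀ x : Fˣ, x ∈ Subgroup.zpowers α)
    (v : ℕ)
    (hv : v = (3 ^ ((m + 1) / 8) - 1) * (3 ^ ((m + 1) / 4) + 1) * (3 ^ ((m + 1) / 2) + 1)) :
    ∃ D : Submodule (ZMod 3) (Fin (3 ^ m - 1) → ZMod 3),
      (D : Set (Fin (3 ^ m - 1) → ZMod 3)) =
        {c | (∑ i : Fin (3 ^ m - 1), algebraMap (ZMod 3) F (c i) * (α : F) ^ (i : ℕ) = 0) ∧
             (∑ i : Fin (3 ^ m - 1), algebraMap (ZMod 3) F (c i) * (α : F) ^ ((i : ℕ) * v) = 0)} ∧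
      Module.finrank (ZMod 3) D = 3 ^ m - 1 - 2 * m ∧
      (∀ c : Fin (3 ^ m - 1) → ZMod 3, c ∈ D → c ≠ 0 → 4 ≤ hammingNorm c) ∧
      (∃ c : Fin (3 ^ m - 1) → ZMod 3, c ∈ D ∧ c ≠ 0 ∧ hammingNorm c = 4) := by
  subst hv
  exact stmt13_general (by omega) (coprime_succ_div_self (by omega))
    (((Nat.Odd.sub_odd (Odd.pow (by decide)) odd_one).mul_right _).mul_right _)
    (exponent_mul_modEq_two hm) hF α hα
end
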